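/- arXiv:1306.3910 — 2 statements merged into one kernel-verified Lean document; each statement's English description precedes it below -/
import Mathlib

section
/- Let X be a finite set of n points in Euclidean 4-space with all pairwise distances at most 1, and assume every point of X is at distance exactly 1 from at least one other point of X. Let e be the number of unordered pairs of points of X at distance exactly 1, and let t be the number of 3-element subsets of X with all three pairwise distances equal to 1. Then 3t ≤ 4e − 2n. -/
attribute [local instance] Classical.propDecidable

/-- The set of unordered pairs of points of `X` at distance exactly `1`. -/
noncomputable def unitPairs (X : Finset (EuclideanSpace ℝ (Fin 4))) :
    Finset (Finset (EuclideanSpace ℝ (Fin 4))) :=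
  (X.powersetCard 2).filter (fun s => ∀ x ∈ s, ∀ y ∈ s, x ≠ y → ‖x - y‖ = 1)

/-- The set of 3-element subsets of `X` with all three pairwise distances equal to `1`. -/
noncomputable def unitTriangles (X : Finset (EuclideanSpace ℝ (Fin 4))) :
    Finset (Finset (EuclideanSpace ℝ (Fin 4))) :=
  (X.powersetCard 3).filter (fun s => ∀ x ∈ s, ∀ y ∈ s, x ≠ y → ‖x - y‖ = 1)

/-!
The unit neighbours of a point `v` lie on a sphere in `ℝ⁴`, pairwise at angle at most `π / 3`, and
a unit triangle at `v` is a pair of them at angle exactly `π / 3`. It is enough that `m ≥ 1` points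
in this position determine at most `4 m - 4` such ordered pairs: summed over `v`, the ordered pairs
count every triangle six times, and the numbers `m` count every edge twice.

Points with at most two partners can be deleted, so assume that every point has at least three.
Viewed from one of the points, each point `i` spans a cone by the directions towards its partners,
in a three-dimensional space. These `m` cones and their negatives meet pairwise only in common
rays: a ray in the cones of `i` and `-j` comes from a partner pair `i, j`, and the cones of `i` and
`j ≠ i` are disjoint. So the partner relation is a plane bipartite graph on the `2 m` cones, and the
inequality is Euler's bound for plane quadrangulations. Rather than through Euler's formula, the
bound is obtained by sweeping a half-plane around an axis that meets the two cones of the viewpoint: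
in both directions of the sweep, every contact is charged to a contact at which some cone begins.
Each of the `2 m - 2` cones off the axis begins once per direction, and takes at most two charges.
-/

open scoped InnerProductSpace

/-! ### Regions and contacts -/

section Hull

variable {V : Type*} [AddCommGroup V] [Module ℝ V] {s : Set V} {f : V →ₗ[ℝ] ℝ} {w : V}

lemma nonneg_of_mem_hull (hf : ∀ v ∈ s, 0 ≤ f v) (hw : w ∈ PointedCone.hull ℝ s) : 0 ≤ f w := by
  induction hw using Submodule.span_induction with
  | mem v hv => exact hf v hv
  | zero => exact (map_zero f).ge
  | add v v' _ _ hv hv' => simpa only [map_add] using add_nonneg hv hv'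
  | smul c v _ hv => exact (map_smul f (c : ℝ) v).symm ▸ mul_nonneg c.2 hv

lemma exists_eq_smul_of_mem_hull {e : V} (hf : ∀ v ∈ s, v ≠ e → 0 < f v) (he : 0 ≤ f e)
    (hw : w ∈ PointedCone.hull ℝ s) (hfw : f w ≤ 0) : ∃ c : ℝ, 0 ≤ c ∧ w = c • e := by
  have hnonneg : ∀ v ∈ PointedCone.hull ℝ s, 0 ≤ f v := fun v => nonneg_of_mem_hull fun v hv => by
    obtain rfl | hne := eq_or_ne v e
    exacts [he, (hf v hv hne).le]
  induction hw using Submodule.span_induction with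
  | mem v hv =>
    obtain rfl | hne := eq_or_ne v e
    · exact ⟨1, zero_le_one, (one_smul _ _).symm⟩
    · exact absurd (hf v hv hne) hfw.not_gt
  | zero => exact ⟨0, le_rfl, (zero_smul _ _).symm⟩
  | add v v' hv hv' ihv ihv' =>
    rw [map_add] at hfw
    obtain ⟨c, hc, rfl⟩ := ihv (by linarith [hnonneg v' hv'])
    obtain ⟨c', hc', rfl⟩ := ihv' (by linarith [hnonneg _ hv])
    exact ⟨c + c', add_nonneg hc hc', (add_smul c c' e).symm⟩
  | smul r v hv ih =>
    obtain ⟨r, hr⟩ := r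
    rw [Nonneg.mk_smul, map_smul, smul_eq_mul] at hfw
    obtain rfl | hr := hr.eq_or_lt
    · exact ⟨0, le_rfl, by simp⟩
    · obtain ⟨c, hc, rfl⟩ := ih (nonpos_of_mul_nonpos_right hfw hr)
      exact ⟨r * c, mul_nonneg hr.le hc, smul_smul r c e⟩

lemma eq_zero_of_mem_hull (hf : ∀ v ∈ s, 0 < f v) (hw : w ∈ PointedCone.hull ℝ s)
    (hfw : f w ≤ 0) : w = 0 := by
  obtain ⟨c, -, rfl⟩ :=
    exists_eq_smul_of_mem_hull (e := 0) (fun v hv _ => hf v hv) (map_zero f).ge hw hfw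
  exact smul_zero c

end Hull

/-- A bicoloured family of regions `A : ι` together with contacts `z : Z`. Each contact joins the
region `side z true` of colour `true` to the region `side z false` of colour `false`, distinct
contacts join distinct pairs, and `dir z` is a vector spanning the ray of contact. -/
structure RaySystem (Z ι H : Type*) where
  color : ι → Bool
  side : Z → Bool → ι
  color_side : ∀ z b, color (side z b) = b
  side_injective : Function.Injective side
  dir : Z → H

namespace RaySystem

variable {Z ι H : Type*} (S : RaySystem Z ι H)

/-- The contact `z` lies on the region `A`. -/
def IsOn (z : Z) (A : ι) : Prop := S.side z (S.color A) = A

/-- The cone over the region `A`: the convex cone generated by the contacts on it. -/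
def cone [AddCommGroup H] [Module ℝ H] (A : ι) : PointedCone ℝ H :=
  PointedCone.hull ℝ (S.dir '' {z | S.IsOn z A})

variable {S} {y z z' : Z} {A B C : ι}

lemma isOn_side (z : Z) (b : Bool) : S.IsOn z (S.side z b) := by rw [IsOn, color_side]

lemma IsOn.eq_of_color_eq (hA : S.IsOn z A) (hB : S.IsOn z B) (h : S.color A = S.color B) :
    A = B := by
  rw [← hA, ← hB, h]

lemma IsOn.eq_or_eq (hAB : A ≠ B) (hA : S.IsOn z A) (hB : S.IsOn z B) (hC : S.IsOn z C) :
    C = A ∨ C = B := by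
  have hcolor : S.color A ≠ S.color B := fun h => hAB (hA.eq_of_color_eq hB h)
  have : S.color C = S.color A ∨ S.color C = S.color B := by
    cases hA : S.color A <;> cases hB : S.color B <;> cases S.color C <;> simp_all
  exact this.imp (hC.eq_of_color_eq hA) (hC.eq_of_color_eq hB)

lemma IsOn.contact_unique (hAB : A ≠ B) (hA : S.IsOn z A) (hB : S.IsOn z B) (hA' : S.IsOn z' A)
    (hB' : S.IsOn z' B) : z = z' := by
  refine S.side_injective (funext fun b => ?_)
  obtain h | h := hA.eq_or_eq hAB hB (S.isOn_side z b)
  · rw [h, ← hA', ← h, S.color_side z b]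
  · rw [h, ← hB', ← h, S.color_side z b]

lemma IsOn.contact_unique_of_adjacent {X E E' : ι} (hz : S.IsOn z X) (hz' : S.IsOn z' X)
    (hE : E ≠ X) (hE' : E' ≠ X) (hzE : S.IsOn z E) (hzE' : S.IsOn z' E') (hyE : S.IsOn y E)
    (hyE' : S.IsOn y E') : z = z' := by
  by_cases hEE : E = E'
  · subst hEE
    exact hz.contact_unique hE.symm hzE hz' hzE'
  · have hXE : S.color E ≠ S.color X := fun h => hE (hzE.eq_of_color_eq hz h)
    have hXE' : S.color E' ≠ S.color X := fun h => hE' (hzE'.eq_of_color_eq hz' h)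
    refine absurd (hyE.eq_of_color_eq hyE' ?_) hEE
    rw [Bool.eq_not_of_ne hXE, Bool.eq_not_of_ne hXE']

variable [AddCommGroup H] [Module ℝ H]

lemma dir_mem_cone (hz : S.IsOn z A) : S.dir z ∈ S.cone A :=
  PointedCone.subset_hull ⟨z, hz, rfl⟩

lemma nonneg_of_mem_cone {f : H →ₗ[ℝ] ℝ} (hf : ∀ z, S.IsOn z A → 0 ≤ f (S.dir z)) {w : H}
    (hw : w ∈ S.cone A) : 0 ≤ f w :=
  nonneg_of_mem_hull (by rintro _ ⟨z, hz, rfl⟩; exact hf z hz) hw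

end RaySystem

/-- A ray system whose cones are salient, are generated by at least two contacts each, have all
their contacts as extreme rays, and overlap pairwise only in common contact rays. -/
structure ContactSystem (Z ι H : Type*) [AddCommGroup H] [Module ℝ H] extends
    RaySystem Z ι H where
  dir_ne_zero : ∀ z, dir z ≠ 0
  nontrivial : ∀ A, {z | toRaySystem.IsOn z A}.Nontrivial
  salient : ∀ A, ∀ w ∈ toRaySystem.cone A, -w ∈ toRaySystem.cone A → w = 0
  exists_contact_of_mem_inf : ∀ A B, A ≠ B → ∀ w ∈ toRaySystem.cone A, w ∈ toRaySystem.cone B →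
    w ≠ 0 → ∃ z, toRaySystem.IsOn z A ∧ toRaySystem.IsOn z B ∧ ∃ c : ℝ, 0 < c ∧ w = c • dir z
  extreme : ∀ A z, toRaySystem.IsOn z A → ∀ w ∈ toRaySystem.cone A, ∀ w' ∈ toRaySystem.cone A,
    ∀ c : ℝ, w + w' = c • dir z → ∃ d : ℝ, 0 ≤ d ∧ w = d • dir z

/-! ### Sweeping a vertical half-plane -/

/-- Three-dimensional space, split into a horizontal plane and a height. -/
abbrev Space := (ℝ × ℝ) × ℝ

/-- The oriented area of the parallelogram spanned by two plane vectors. -/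
def planeCross (p : ℝ × ℝ) : ℝ × ℝ →ₗ[ℝ] ℝ :=
  p.1 • LinearMap.snd ℝ ℝ ℝ - p.2 • LinearMap.fst ℝ ℝ ℝ

lemma planeCross_apply (p q : ℝ × ℝ) : planeCross p q = p.1 * q.2 - p.2 * q.1 := by
  simp [planeCross]

lemma planeCross_self (p : ℝ × ℝ) : planeCross p p = 0 := by rw [planeCross_apply]; ring

lemma planeCross_swap (p q : ℝ × ℝ) : planeCross q p = -planeCross p q := by
  simp only [planeCross_apply]; ring

lemma planeCross_smul_add_smul (p q r : ℝ × ℝ) :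
    planeCross q r • p + planeCross p q • r = planeCross p r • q := by
  ext <;> simp only [planeCross_apply, Prod.fst_add, Prod.snd_add, Prod.smul_fst, Prod.smul_snd,
    smul_eq_mul] <;> ring

lemma units_cast_mul_self (σ : ℤˣ) : (σ : ℝ) * σ = 1 := by
  exact_mod_cast Int.units_coe_mul_self σ

lemma units_cast_ne_zero (σ : ℤˣ) : (σ : ℝ) ≠ 0 :=
  left_ne_zero_of_mul_eq_one (units_cast_mul_self σ)

lemma units_cast_neg (σ : ℤˣ) : ((-σ : ℤˣ) : ℝ) = -σ := by push_cast; rfl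

/-- A contact system in space in general position, with a region `pole τ` around each of the two
vertical directions; it is swept by rotating a vertical half-plane about the vertical axis. -/
structure SweepSystem (Z ι : Type*) extends ContactSystem Z ι Space where
  pole : ℤˣ → ι
  exists_add_vertical_mem : ∀ τ (w : Space), ∃ s : ℝ, 0 < s ∧
    w + (0, τ * s) ∈ toRaySystem.cone (pole τ)
  not_isOn_poles : ∀ z, ¬ (toRaySystem.IsOn z (pole 1) ∧ toRaySystem.IsOn z (pole (-1)))
  generic : ∀ z z', z ≠ z' → planeCross (dir z).1 (dir z').1 = 0 → ∃ c < (0 : ℝ), dir z' = c • dir z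

namespace SweepSystem

open RaySystem

variable {Z ι : Type*} (S : SweepSystem Z ι)

/-- The cone over `A` meets the vertical half-plane through the contact `y`. -/
def Meets (A : ι) (y : Z) : Prop := ∃ h : ℝ, ((S.dir y).1, h) ∈ S.cone A

/-- The cone over `A` passes above (`τ = 1`) or below (`τ = -1`) the contact `y`. -/
def Passes (τ : ℤˣ) (A : ι) (y : Z) : Prop :=
  ∃ h : ℝ, ((S.dir y).1, h) ∈ S.cone A ∧ 0 < τ * (h - (S.dir y).2)

/-- On some vertical half-plane, a point of `A` lies above (`τ = 1`) or below (`τ = -1`) a point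
of `B`. -/
def Above (τ : ℤˣ) (A B : ι) : Prop :=
  ∃ (p : ℝ × ℝ) (h k : ℝ), p ≠ 0 ∧ (p, h) ∈ S.cone A ∧ (p, k) ∈ S.cone B ∧ 0 < τ * (h - k)

/-- `y` is the first contact of the non-polar region `A` met when sweeping in direction `σ`. -/
def IsFirst (σ : ℤˣ) (y : Z) (A : ι) : Prop :=
  S.IsOn y A ∧ (∀ τ, S.pole τ ≠ A) ∧ ∀ z, S.IsOn z A → 0 ≤ σ * planeCross (S.dir y).1 (S.dir z).1

variable {S} {σ τ : ℤˣ} {y z : Z} {A B : ι} {w w' : Space} {p q r : ℝ × ℝ} {h k : ℝ}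

lemma fst_dir_ne_zero (z : Z) : (S.dir z).1 ≠ 0 := by
  intro h0
  obtain ⟨z', hz', hne⟩ := (S.nontrivial (S.side z true)).exists_ne z
  obtain ⟨c, hc, heq⟩ := S.generic z z' hne.symm (by rw [h0]; simp [planeCross])
  refine S.dir_ne_zero z' (S.salient _ _ (dir_mem_cone hz') ?_)
  rw [heq, ← neg_smul]
  exact PointedCone.smul_mem _ (neg_nonneg.2 hc.le)
    (dir_mem_cone (isOn_side z true))

lemma eq_of_smul_fst_dir {c : ℝ} (hc : 0 < c) (h : c • (S.dir z).1 = (S.dir y).1) : z = y := by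
  by_contra hne
  obtain ⟨d, hd, heq⟩ := S.generic z y hne (by rw [← h, map_smul, planeCross_self, smul_zero])
  have : (c - d) • (S.dir z).1 = 0 := by rw [sub_smul, h, heq, Prod.smul_fst, sub_self]
  exact (smul_ne_zero (by linarith) (fst_dir_ne_zero z)) this

lemma isOn_of_mem_inf (hAB : A ≠ B) (hA : w ∈ S.cone A) (hB : w ∈ S.cone B)
    (hw : w.1 = (S.dir y).1) : S.IsOn y A ∧ S.IsOn y B ∧ w = S.dir y := by
  have hw0 : w ≠ 0 := by rintro rfl; exact fst_dir_ne_zero y hw.symm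
  obtain ⟨z, hzA, hzB, c, hc, rfl⟩ := S.exists_contact_of_mem_inf A B hAB w hA hB hw0
  obtain rfl := eq_of_smul_fst_dir hc hw
  have hc1 : c = 1 := smul_left_injective ℝ (fst_dir_ne_zero z) (hw.trans (one_smul ℝ _).symm)
  exact ⟨hzA, hzB, by rw [hc1, one_smul]⟩

lemma isOn_of_dir_mem_cone (h : S.dir y ∈ S.cone A) : S.IsOn y A := by
  by_cases hA : A = S.side y true
  · exact hA ▸ isOn_side y true
  · exact (isOn_of_mem_inf hA h (dir_mem_cone (isOn_side y true)) rfl).1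

lemma eq_smul_dir_of_add_eq (hz : S.IsOn z A) (hw : w ∈ S.cone A) (hw' : w' ∈ S.cone A) {c d : ℝ}
    (h : w + w' = c • S.dir z) (hd : w.1 = d • (S.dir z).1) : w = d • S.dir z := by
  obtain ⟨e, -, rfl⟩ := S.extreme A z hz w hw w' hw' c h
  rw [smul_left_injective ℝ (fst_dir_ne_zero z) hd]

lemma above_neg : S.Above (-τ) A B ↔ S.Above τ B A := by
  constructor <;> rintro ⟨p, h, k, hp, hA, hB, hhk⟩ <;>
    refine ⟨p, k, h, hp, hB, hA, ?_⟩ <;> rw [units_cast_neg] at * <;> linarith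

lemma smul_add_smul_eq_of_height (p p' : ℝ × ℝ) (h k h' k' : ℝ) (τ : ℤˣ) :
    (τ * (h' - k')) • ((p, h) : Space) + (τ * (h - k)) • ((p', k') : Space) =
      (τ * (h' - k')) • ((p, k) : Space) + (τ * (h - k)) • ((p', h') : Space) := by
  ext <;> simp only [Prod.fst_add, Prod.snd_add, Prod.smul_fst, Prod.smul_snd, smul_eq_mul]
  ring

lemma above_asymm (hAB : A ≠ B) (h₁ : S.Above τ A B) : ¬ S.Above τ B A := by
  obtain ⟨p, h, k, hp, hA, hB, hhk⟩ := h₁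
  rintro ⟨p', h', k', -, hB', hA', hhk'⟩
  set c := τ * (h' - k')
  set c' := τ * (h - k)
  have hcA := PointedCone.smul_mem _ hhk'.le hA
  have hcA' := PointedCone.smul_mem _ hhk.le hA'
  have hcB := PointedCone.smul_mem _ hhk'.le hB
  have hcB' := PointedCone.smul_mem _ hhk.le hB'
  -- the two crossings combine to a common point of the cones
  have heq := smul_add_smul_eq_of_height p p' h k h' k' τ
  have hne : c • ((p, h) : Space) + c' • ((p', k') : Space) ≠ 0 := fun h0 => by
    have := S.salient A _ hcA (by rwa [neg_eq_of_add_eq_zero_right h0])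
    exact hp (congrArg Prod.fst ((smul_eq_zero.1 this).resolve_left hhk'.ne'))
  obtain ⟨z, hzA, hzB, e, -, hz⟩ := S.exists_contact_of_mem_inf A B hAB _ (add_mem hcA hcA')
    (heq ▸ add_mem hcB hcB') hne
  obtain ⟨d, -, hd⟩ := S.extreme A z hzA _ hcA _ hcA' e hz
  have hd' := eq_smul_dir_of_add_eq hzB hcB hcB' (heq ▸ hz) (d := d)
    (by simpa only [Prod.smul_fst] using congrArg Prod.fst hd)
  have hkh : c * h = c * k := by
    simpa only [Prod.smul_snd, smul_eq_mul] using congrArg Prod.snd (hd.trans hd'.symm)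
  have : h - k = 0 := sub_eq_zero.2 (mul_left_cancel₀ hhk'.ne' hkh)
  simp [c', this] at hhk

lemma vertical_mem_cone_pole (τ : ℤˣ) {s : ℝ} (hs : 0 ≤ s) :
    ((0, τ * s) : Space) ∈ S.cone (S.pole τ) := by
  obtain ⟨r, hr, h⟩ := S.exists_add_vertical_mem τ 0
  convert PointedCone.smul_mem _ (div_nonneg hs hr.le) h using 1
  ext
  · simp
  · simp
  · simp; field_simp

lemma pole_injective : Function.Injective S.pole := by
  have hne : S.pole 1 ≠ S.pole (-1) := fun h => by
    have := S.salient _ (0, 1) (by simpa using vertical_mem_cone_pole (S := S) 1 zero_le_one)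
      (by simpa [h] using vertical_mem_cone_pole (S := S) (-1) zero_le_one)
    simp at this
  intro σ τ h
  by_contra hστ
  rcases Int.units_eq_one_or σ with rfl | rfl <;> rcases Int.units_eq_one_or τ with rfl | rfl
  exacts [hστ rfl, hne h, hne h.symm, hστ rfl]

lemma eq_pole_of_vertical_mem {s : ℝ} (hs : 0 < s) (h : ((0, τ * s) : Space) ∈ S.cone A) :
    S.pole τ = A := by
  by_contra hA
  have hne : ((0, τ * s) : Space) ≠ 0 := fun h0 =>
    mul_ne_zero (units_cast_ne_zero τ) hs.ne' (congrArg Prod.snd h0)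
  obtain ⟨z, -, -, c, hc, hz⟩ :=
    S.exists_contact_of_mem_inf _ A hA _ (vertical_mem_cone_pole τ hs.le) h hne
  exact smul_ne_zero hc.ne' (fst_dir_ne_zero z) (congrArg Prod.fst hz).symm

lemma eq_zero_of_fst_eq_zero (hA : ∀ τ, S.pole τ ≠ A) (hw : w ∈ S.cone A) (h0 : w.1 = 0) :
    w = 0 := by
  have hw' : w = (0, w.2) := Prod.ext h0 rfl
  rcases lt_trichotomy w.2 0 with h | h | h
  · exact absurd (eq_pole_of_vertical_mem (τ := -1) (neg_pos.2 h) (by simpa [← hw'])) (hA _)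
  · exact Prod.ext h0 h
  · exact absurd (eq_pole_of_vertical_mem (τ := 1) h (by simpa [← hw'])) (hA _)

lemma planeCross_trans (hA : ∀ τ, S.pole τ ≠ A) {a b c : Space} (ha : a ∈ S.cone A)
    (hb : b ∈ S.cone A) (hc : c ∈ S.cone A) (hab : 0 < σ * planeCross a.1 b.1)
    (hbc : 0 < σ * planeCross b.1 c.1) :
    0 < σ * planeCross a.1 c.1 := by
  by_contra! hac
  have hσa := PointedCone.smul_mem _ hbc.le ha
  have hσc := PointedCone.smul_mem _ hab.le hc
  have hσb := PointedCone.smul_mem (r := -(σ * planeCross a.1 c.1)) _ (by linarith) hb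
  have hzero := eq_zero_of_fst_eq_zero hA (add_mem hσa (add_mem hσc hσb)) (by
    have := congrArg ((σ : ℝ) • ·) (planeCross_smul_add_smul a.1 b.1 c.1)
    simp only [smul_add, smul_smul] at this
    simp only [Prod.fst_add, Prod.smul_fst, ← add_assoc, this, neg_smul, Prod.fst_neg,
      add_neg_cancel])
  have := S.salient A _ hσa (by rw [neg_eq_of_add_eq_zero_right hzero]; exact add_mem hσc hσb)
  rw [(smul_eq_zero.1 this).resolve_left hbc.ne'] at hab
  simp [planeCross] at hab

lemma planeCross_pos_of_ne (hy : S.IsOn y A) (hz : S.IsOn z A) (hne : y ≠ z)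
    (h : 0 ≤ σ * planeCross (S.dir y).1 (S.dir z).1) :
    0 < σ * planeCross (S.dir y).1 (S.dir z).1 := by
  refine h.lt_of_ne' (mul_ne_zero (units_cast_ne_zero σ) fun h0 => ?_)
  obtain ⟨c, hc, heq⟩ := S.generic y z hne h0
  refine S.dir_ne_zero z (S.salient A _ (dir_mem_cone hz) ?_)
  rw [heq, ← neg_smul]
  exact PointedCone.smul_mem _ (neg_nonneg.2 hc.le) (dir_mem_cone hy)

lemma exists_isFirst [Finite Z] (hA : ∀ τ, S.pole τ ≠ A) (σ : ℤˣ) : ∃ y, S.IsFirst σ y A := by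
  let R (a b : {z // S.IsOn z A}) : Prop := 0 < σ * planeCross (S.dir a).1 (S.dir b).1
  have : Std.Irrefl R := ⟨fun a => by
    simp only [R, planeCross_self, mul_zero, lt_irrefl, not_false_eq_true]⟩
  have : IsTrans _ R := ⟨fun a b c => planeCross_trans hA (dir_mem_cone a.2)
    (dir_mem_cone b.2) (dir_mem_cone c.2)⟩
  obtain ⟨z, hz⟩ := (S.nontrivial A).nonempty
  obtain ⟨y, -, hy⟩ := (Finite.wellFounded_of_trans_of_irrefl R).has_min Set.univ
    ⟨⟨z, hz⟩, trivial⟩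
  refine ⟨y, y.2, hA, fun x hx => ?_⟩
  have := hy ⟨x, hx⟩ trivial
  rw [planeCross_swap]
  simp only [R] at this
  linarith

lemma IsFirst.exists_eq_smul (hy : S.IsFirst σ y A) (hw : w ∈ S.cone A)
    (h : σ * planeCross (S.dir y).1 w.1 ≤ 0) : ∃ c : ℝ, 0 ≤ c ∧ w = c • S.dir y := by
  refine exists_eq_smul_of_mem_hull
    (f := (σ : ℝ) • planeCross (S.dir y).1 ∘ₗ LinearMap.fst ℝ (ℝ × ℝ) ℝ) ?_ (hy.2.2 y hy.1) hw h
  rintro _ ⟨z, hz, rfl⟩ hne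
  exact planeCross_pos_of_ne hy.1 hz (fun h => hne (h ▸ rfl)) (hy.2.2 z hz)

lemma IsFirst.not_passes (hy : S.IsFirst σ y A) : ¬ S.Passes τ A y := by
  rintro ⟨h, hh, hpos⟩
  obtain ⟨c, -, hc⟩ := hy.exists_eq_smul hh (by simp only [planeCross_self, mul_zero, le_refl])
  have hc1 : c = 1 := smul_left_injective ℝ (fst_dir_ne_zero y)
    ((congrArg Prod.fst hc).symm.trans (one_smul ℝ _).symm)
  have hy2 : h = (S.dir y).2 := by simpa [hc1] using congrArg Prod.snd hc
  simp [hy2] at hpos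

lemma meets_of_isOn (h : S.IsOn y A) : S.Meets A y := ⟨_, dir_mem_cone h⟩

lemma Passes.meets (h : S.Passes τ A y) : S.Meets A y := h.imp fun _ h => h.1

lemma Meets.passes_or_passes (h : S.Meets A y) (hA : ¬ S.IsOn y A) (τ : ℤˣ) :
    S.Passes τ A y ∨ S.Passes (-τ) A y := by
  obtain ⟨h, hh⟩ := h
  rcases lt_trichotomy (τ * (h - (S.dir y).2)) 0 with h0 | h0 | h0
  · exact Or.inr ⟨h, hh, by rw [units_cast_neg]; linarith⟩
  · have : h = (S.dir y).2 := sub_eq_zero.1 ((mul_eq_zero.1 h0).resolve_left (units_cast_ne_zero τ))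
    exact absurd (isOn_of_dir_mem_cone (by simpa [this] using hh)) hA
  · exact Or.inl ⟨h, hh, h0⟩

lemma Passes.not_passes_neg (h₁ : S.Passes τ A y) : ¬ S.Passes (-τ) A y := by
  obtain ⟨h, hh, hpos⟩ := h₁
  rintro ⟨k, hk, hneg⟩
  rw [units_cast_neg] at hneg
  set a := τ * (h - (S.dir y).2)
  set b := -τ * (k - (S.dir y).2)
  have hsum : b • (((S.dir y).1, h) : Space) + a • (((S.dir y).1, k) : Space)
      = (a + b) • S.dir y := by
    ext <;> simp only [a, b, Prod.fst_add, Prod.snd_add, Prod.smul_fst, Prod.smul_snd,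
      smul_eq_mul] <;> ring
  have hbh := PointedCone.smul_mem _ hneg.le hh
  have hak := PointedCone.smul_mem _ hpos.le hk
  have hy : S.IsOn y A := isOn_of_dir_mem_cone (by
    have hmem := PointedCone.smul_mem _ (inv_nonneg.2 (add_pos hpos hneg).le) (add_mem hbh hak)
    rwa [hsum, inv_smul_smul₀ (add_pos hpos hneg).ne'] at hmem)
  have := congrArg Prod.snd (eq_smul_dir_of_add_eq hy hbh hak hsum (d := b) rfl)
  have hhy : h = (S.dir y).2 := mul_left_cancel₀ hneg.ne' this
  simp [a, hhy] at hpos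

/-! ### Events of the sweep -/

variable {x : Z} {C X Y : ι}

lemma passes_pole (τ : ℤˣ) (y : Z) : S.Passes τ (S.pole τ) y := by
  obtain ⟨s, hs, h⟩ := S.exists_add_vertical_mem τ (S.dir y)
  refine ⟨(S.dir y).2 + τ * s, by simpa [Prod.add_def] using h, ?_⟩
  rwa [add_sub_cancel_left, ← mul_assoc, units_cast_mul_self, one_mul]

lemma Passes.above (hA : S.Passes τ A y) (hB : S.IsOn y B) : S.Above τ A B := by
  obtain ⟨h, hh, hpos⟩ := hA
  exact ⟨_, h, _, fst_dir_ne_zero y, hh, dir_mem_cone hB, hpos⟩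

lemma Passes.above_of_passes_neg (hA : S.Passes τ A y) (hB : S.Passes (-τ) B y) :
    S.Above τ A B := by
  obtain ⟨h, hh, hpos⟩ := hA
  obtain ⟨k, hk, hneg⟩ := hB
  rw [units_cast_neg] at hneg
  exact ⟨_, h, k, fst_dir_ne_zero y, hh, hk, by linarith⟩

lemma Meets.above_or_above (hAB : A ≠ B) (hA : S.Meets A y) (hB : S.Meets B y)
    (hy : ¬ (S.IsOn y A ∧ S.IsOn y B)) : S.Above 1 A B ∨ S.Above 1 B A := by
  obtain ⟨h, hh⟩ := hA
  obtain ⟨k, hk⟩ := hB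
  rcases lt_trichotomy h k with hhk | rfl | hhk
  · exact Or.inr ⟨_, k, h, fst_dir_ne_zero y, hk, hh, by simpa⟩
  · have := isOn_of_mem_inf hAB hh hk rfl
    exact absurd ⟨this.1, this.2.1⟩ hy
  · exact Or.inl ⟨_, h, k, fst_dir_ne_zero y, hh, hk, by simpa⟩

lemma above_pole (τ : ℤˣ) (A : ι) : S.Above τ (S.pole τ) A := by
  obtain ⟨z, hz⟩ := (S.nontrivial A).nonempty
  exact (passes_pole τ z).above hz

lemma pole_ne_of_above_above (hXA : X ≠ A) (hXB : X ≠ B) (hA : S.Above τ A X)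
    (hB : S.Above τ X B) (τ' : ℤˣ) : S.pole τ' ≠ X := by
  rintro rfl
  obtain rfl | rfl : τ' = τ ∨ τ' = -τ := or_iff_not_imp_left.2 Int.units_ne_iff_eq_neg.1
  · exact above_asymm hXA (above_pole τ' A) hA
  · exact above_asymm hXB hB (above_neg.1 (above_pole (-τ) B))

lemma mem_cone_of_fst_eq_smul {c : ℝ} (hc : 0 < c) (hw : w ∈ S.cone A)
    (h : w.1 = c • (S.dir y).1) : ((S.dir y).1, c⁻¹ * w.2) ∈ S.cone A := by
  convert PointedCone.smul_mem _ (inv_nonneg.2 hc.le) hw using 1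
  exact Prod.ext (by rw [Prod.smul_fst, h, inv_smul_smul₀ hc.ne']) rfl

lemma meets_of_planeCross_nonneg {a b : Space} (ha : a ∈ S.cone A) (hb : b ∈ S.cone A)
    (hay : 0 ≤ σ * planeCross a.1 (S.dir y).1) (hyb : 0 ≤ σ * planeCross (S.dir y).1 b.1)
    (hab : 0 < σ * planeCross a.1 b.1) : S.Meets A y := by
  refine ⟨_, mem_cone_of_fst_eq_smul hab
    (add_mem (PointedCone.smul_mem _ hyb ha) (PointedCone.smul_mem _ hay hb)) ?_⟩
  have := congrArg ((σ : ℝ) • ·) (planeCross_smul_add_smul a.1 (S.dir y).1 b.1)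
  simpa only [smul_add, smul_smul, Prod.fst_add, Prod.smul_fst] using this

lemma exists_passes_of_planeCross_pos {a b : Z} (ha : S.IsOn a A) (hb : S.IsOn b A)
    (hy : S.IsOn y A) (hay : 0 < planeCross (S.dir a).1 (S.dir y).1)
    (hyb : 0 < planeCross (S.dir y).1 (S.dir b).1)
    (hab : 0 < planeCross (S.dir a).1 (S.dir b).1) : ∃ τ, S.Passes τ A y := by
  by_contra! hpass
  have ha' := PointedCone.smul_mem _ hyb.le (dir_mem_cone ha)
  have hb' := PointedCone.smul_mem _ hay.le (dir_mem_cone hb)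
  have hfst := planeCross_smul_add_smul (S.dir a).1 (S.dir y).1 (S.dir b).1
  have hmem := mem_cone_of_fst_eq_smul hab (add_mem ha' hb') hfst
  set v := planeCross (S.dir y).1 (S.dir b).1 • S.dir a +
    planeCross (S.dir a).1 (S.dir y).1 • S.dir b
  have hsnd : (planeCross (S.dir a).1 (S.dir b).1)⁻¹ * v.2 = (S.dir y).2 := by
    by_contra hne
    rcases lt_or_gt_of_ne hne with h | h
    · exact hpass (-1) ⟨_, hmem, by push_cast; linarith⟩
    · exact hpass 1 ⟨_, hmem, by push_cast; linarith⟩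
  obtain ⟨d, -, hd⟩ := S.extreme A y hy _ ha' _ hb' _
    (Prod.ext hfst ((inv_mul_eq_iff_eq_mul₀ hab.ne').1 hsnd))
  have := congrArg (fun v : Space => planeCross (S.dir y).1 v.1) hd
  simp only [Prod.smul_fst, map_smul, planeCross_self, smul_eq_mul, mul_zero] at this
  rw [planeCross_swap (S.dir a).1] at this
  exact mul_ne_zero hyb.ne' (neg_ne_zero.2 hay.ne') this

lemma exists_passes_of_isOn [Finite Z] (hy : S.IsOn y A) (hfirst : ∀ σ, ¬ S.IsFirst σ y A) :
    ∃ τ, S.Passes τ A y := by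
  by_cases! hA : ∃ τ, S.pole τ = A
  · obtain ⟨τ, rfl⟩ := hA
    exact ⟨τ, passes_pole τ y⟩
  obtain ⟨a, ha⟩ := exists_isFirst hA 1
  obtain ⟨b, hb⟩ := exists_isFirst hA (-1)
  have hay := planeCross_pos_of_ne ha.1 hy (by rintro rfl; exact hfirst 1 ha) (ha.2.2 y hy)
  have hyb := planeCross_pos_of_ne hb.1 hy (by rintro rfl; exact hfirst (-1) hb) (hb.2.2 y hy)
  have hyb : 0 < ((1 : ℤˣ) : ℝ) * planeCross (S.dir y).1 (S.dir b).1 := by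
    rw [planeCross_swap]
    push_cast at hyb ⊢
    linarith
  have hab := planeCross_trans hA (dir_mem_cone ha.1) (dir_mem_cone hy) (dir_mem_cone hb.1) hay hyb
  simp only [Units.val_one, Int.cast_one, one_mul] at hay hyb hab
  exact exists_passes_of_planeCross_pos ha.1 hb.1 hy hay hyb hab

variable (S) in
/-- Among the regions passing above (`τ = 1`) or below (`τ = -1`) the contact `y`, the region `X`
comes closest to `y`. -/
def IsNearest (τ : ℤˣ) (X : ι) (y : Z) : Prop :=
  S.Passes τ X y ∧ ∀ A, A ≠ X → S.Passes τ A y → S.Above τ A X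

lemma exists_isNearest [Finite ι] (τ : ℤˣ) (y : Z) : ∃ X, S.IsNearest τ X y := by
  let P := {A // S.Passes τ A y}
  choose height hmem hpos using fun A : P => A.2
  have : Nonempty P := ⟨⟨S.pole τ, passes_pole τ y⟩⟩
  obtain ⟨X, hX⟩ := Finite.exists_min fun A => τ * (height A - (S.dir y).2)
  refine ⟨X, X.2, fun A hne hA => ?_⟩
  refine ⟨_, _, _, fst_dir_ne_zero y, hmem ⟨A, hA⟩, hmem X, ?_⟩
  refine lt_of_le_of_ne (by linarith [hX ⟨A, hA⟩]) fun h0 => ?_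
  have heq := sub_eq_zero.1 ((mul_eq_zero.1 h0.symm).resolve_left (units_cast_ne_zero τ))
  have hdir := (isOn_of_mem_inf hne (hmem ⟨A, hA⟩) (heq ▸ hmem X) rfl).2.2
  have := hpos ⟨A, hA⟩
  have hy2 : height ⟨A, hA⟩ = (S.dir y).2 := congrArg Prod.snd hdir
  rw [hy2, sub_self, mul_zero] at this
  exact lt_irrefl _ this

lemma IsNearest.eq_of_passes (hX : S.IsNearest τ X y) (hC : S.IsOn y C) (hpass : S.Passes τ C y) :
    C = X := by
  by_contra hne
  exact above_asymm hne (hX.2 C hne hpass) (hX.1.above hC)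

variable (S) in
/-- Sweeping in direction `σ`, the contact `y` precedes `z`, and either one of the regions at `z`
begins at `y`, or some region caught between the two regions at `z` ends at `y`. -/
def IsEvent (σ : ℤˣ) (z y : Z) : Prop :=
  0 < σ * planeCross (S.dir y).1 (S.dir z).1 ∧
    ((∃ A, S.IsOn z A ∧ S.IsFirst σ y A) ∨
      ∃ A B D τ, A ≠ B ∧ S.IsOn z A ∧ S.IsOn z B ∧ ¬ S.IsOn z D ∧ S.IsFirst (-σ) y D ∧
        S.Above τ A B ∧ S.Above τ A D ∧ S.Above τ D B)

variable (S) in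
/-- No region begins at `z`, and `y` is the last event preceding `z` in the sweep direction `σ`. -/
structure IsLastEvent (σ : ℤˣ) (z y : Z) : Prop where
  not_isFirst : ∀ A, ¬ S.IsFirst σ z A
  isEvent : S.IsEvent σ z y
  latest : ∀ x, S.IsEvent σ z x → 0 ≤ σ * planeCross (S.dir x).1 (S.dir y).1

lemma exists_isFirst_isEvent [Finite Z] (hz : ∀ A, ¬ S.IsFirst σ z A) (hA : S.IsOn z A)
    (hpole : ∀ τ, S.pole τ ≠ A) : ∃ x, S.IsOn x A ∧ S.IsEvent σ z x := by
  obtain ⟨x, hx⟩ := exists_isFirst hpole σ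
  have hxz : x ≠ z := by rintro rfl; exact hz A hx
  exact ⟨x, hx.1, planeCross_pos_of_ne hx.1 hA hxz (hx.2.2 z hA), Or.inl ⟨A, hA, hx⟩⟩

lemma exists_isEvent [Finite Z] (hz : ∀ A, ¬ S.IsFirst σ z A) : ∃ x, S.IsEvent σ z x := by
  by_contra! hno
  have hpole (b : Bool) : ∃ τ, S.pole τ = S.side z b := by
    by_contra! h
    obtain ⟨x, -, hx⟩ := exists_isFirst_isEvent hz (isOn_side z b) h
    exact hno x hx
  obtain ⟨τ, hτ⟩ := hpole true
  obtain ⟨τ', hτ'⟩ := hpole false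
  have hne : τ ≠ τ' := by
    rintro rfl
    have := congrArg S.color (hτ.symm.trans hτ')
    rw [S.color_side, S.color_side] at this
    exact Bool.noConfusion this
  have hon : ∀ ρ, S.IsOn z (S.pole ρ) := fun ρ => by
    obtain rfl | rfl : ρ = τ ∨ ρ = τ' := by
      by_cases h : ρ = τ
      · exact Or.inl h
      · exact Or.inr ((Int.units_ne_iff_eq_neg.1 h).trans (Int.units_ne_iff_eq_neg.1 hne.symm).symm)
    exacts [hτ ▸ isOn_side z true, hτ' ▸ isOn_side z false]
  exact S.not_isOn_poles z ⟨hon 1, hon (-1)⟩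

lemma exists_isLastEvent [Finite Z] (hz : ∀ A, ¬ S.IsFirst σ z A) :
    ∃ y, S.IsLastEvent σ z y := by
  obtain ⟨x, hx⟩ := exists_isEvent hz
  have : Nonempty {y // S.IsEvent σ z y} := ⟨x, hx⟩
  -- the events lie in an open half-plane bounded by `z`, where the cotangent is monotone
  obtain ⟨y, hy⟩ := Finite.exists_max fun y : {y // S.IsEvent σ z y} =>
    ((S.dir y).1.1 * (S.dir z).1.1 + (S.dir y).1.2 * (S.dir z).1.2) /
      (σ * planeCross (S.dir y).1 (S.dir z).1)
  refine ⟨y, hz, y.2, fun x hx => ?_⟩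
  have h := hy ⟨x, hx⟩
  rw [div_le_div_iff₀ hx.1 y.2.1] at h
  have hpos : 0 < (S.dir z).1.1 ^ 2 + (S.dir z).1.2 ^ 2 := by
    rcases not_and_or.1 (mt Prod.ext_iff.2 (fst_dir_ne_zero z)) with h | h <;>
      simp only [Prod.fst_zero, Prod.snd_zero] at h <;> positivity
  refine nonneg_of_mul_nonneg_right ?_ hpos
  simp only [planeCross_apply] at h ⊢
  nlinarith

lemma IsLastEvent.meets [Finite Z] (hy : S.IsLastEvent σ z y) (hA : S.IsOn z A) :
    S.Meets A y := by
  by_cases! hpole : ∃ τ, S.pole τ = A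
  · obtain ⟨τ, rfl⟩ := hpole
    exact (passes_pole τ y).meets
  obtain ⟨x, hxA, hx⟩ := exists_isFirst_isEvent hy.not_isFirst hA hpole
  exact meets_of_planeCross_nonneg (dir_mem_cone hxA) (dir_mem_cone hA) (hy.latest x hx)
    hy.isEvent.1.le hx.1

lemma IsLastEvent.ne (hy : S.IsLastEvent σ z y) : y ≠ z := by
  rintro rfl
  simpa only [planeCross_self, mul_zero, lt_irrefl] using hy.isEvent.1

lemma IsFirst.eq_of_meets (hx : S.IsFirst σ x A) (hy : S.Meets A y)
    (h : σ * planeCross (S.dir x).1 (S.dir y).1 ≤ 0) : x = y := by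
  obtain ⟨k, hk⟩ := hy
  obtain ⟨c, hc, heq⟩ := hx.exists_eq_smul hk h
  have hfst : (S.dir y).1 = c • (S.dir x).1 := congrArg Prod.fst heq
  refine eq_of_smul_fst_dir (hc.lt_of_ne' ?_) hfst.symm
  rintro rfl
  exact fst_dir_ne_zero y (by rw [hfst, zero_smul])

lemma IsFirst.not_isFirst_neg (h : S.IsFirst σ y A) : ¬ S.IsFirst (-σ) y A := by
  intro h'
  obtain ⟨z, hz, hne⟩ := (S.nontrivial A).exists_ne y
  have := h'.2.2 z hz
  rw [units_cast_neg] at this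
  linarith [planeCross_pos_of_ne h.1 hz hne.symm (h.2.2 z hz)]

lemma IsFirst.contact_unique (h : S.IsFirst σ y A) (h' : S.IsFirst σ z A) : y = z := by
  refine h.eq_of_meets (meets_of_isOn h'.1) ?_
  have := h'.2.2 y h.1
  rw [planeCross_swap] at this
  linarith

lemma squeeze [Finite Z] (hL : S.IsLastEvent σ z y) (hAB : A ≠ B) (hA : S.IsOn z A)
    (hB : S.IsOn z B) (hab : S.Above τ A B) (hX : ¬ S.IsOn z X) (hax : S.Above τ A X)
    (hxb : S.Above τ X B) (hXy : S.Meets X y) : S.IsFirst (-σ) y X := by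
  have hXA : X ≠ A := by rintro rfl; exact hX hA
  have hXB : X ≠ B := by rintro rfl; exact hX hB
  obtain ⟨e, he⟩ := exists_isFirst (pole_ne_of_above_above hXA hXB hax hxb) (-σ)
  by_contra hy
  have hye : 0 < σ * planeCross (S.dir y).1 (S.dir e).1 := by
    by_contra! hle
    refine hy (he.eq_of_meets hXy ?_ ▸ he)
    rw [units_cast_neg, planeCross_swap]
    linarith
  have hez : σ * planeCross (S.dir e).1 (S.dir z).1 ≤ 0 := by
    by_contra! hez
    have := hL.latest e ⟨hez, Or.inr ⟨A, B, X, τ, hAB, hA, hB, hX, he, hab, hax, hxb⟩⟩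
    rw [planeCross_swap] at this
    linarith
  obtain ⟨k, hk⟩ := hXy
  have hXz : S.Meets X z := meets_of_planeCross_nonneg hk (dir_mem_cone he.1) hL.isEvent.1.le
    (by rw [planeCross_swap]; linarith) hye
  rcases hXz.passes_or_passes hX τ with h | h
  · exact above_asymm hXA (h.above hA) hax
  · exact above_asymm hXB hxb (above_neg.1 (h.above hB))

lemma IsEvent.isFirst_or_isFirst (hc : S.IsEvent σ z y) (hAB : A ≠ B) (hA : S.IsOn z A)
    (hB : S.IsOn z B) (hab : S.Above τ A B) :
    (∃ C, S.IsOn z C ∧ S.IsFirst σ y C) ∨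
      ∃ D, ¬ S.IsOn z D ∧ S.IsFirst (-σ) y D ∧ S.Above τ A D ∧ S.Above τ D B := by
  refine hc.2.imp_right ?_
  rintro ⟨A', B', D, τ', hAB', hA', hB', hD, hfirst, hab', had', hdb'⟩
  refine ⟨D, hD, hfirst, ?_⟩
  have hτ : τ' = τ ∨ τ' = -τ := or_iff_not_imp_left.2 Int.units_ne_iff_eq_neg.1
  obtain ⟨rfl, rfl⟩ | ⟨rfl, rfl⟩ : (A' = A ∧ B' = B) ∨ (A' = B ∧ B' = A) := by
    rcases hA.eq_or_eq hAB hB hA' with rfl | rfl <;>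
      rcases hA.eq_or_eq hAB hB hB' with rfl | rfl <;> simp_all only [ne_eq, not_true_eq_false,
        not_false_eq_true, and_self, true_or, or_true]
  · obtain rfl | rfl := hτ
    · exact ⟨had', hdb'⟩
    · exact absurd (above_neg.1 hab') (above_asymm hAB hab)
  · obtain rfl | rfl := hτ
    · exact absurd hab' (above_asymm hAB hab)
    · exact ⟨above_neg.1 hdb', above_neg.1 had'⟩

lemma IsEvent.exists_isFirst_between (hc : S.IsEvent σ z y) (hAB : A ≠ B) (hA : S.IsOn z A)
    (hB : S.IsOn z B) (hab : S.Above τ A B) (hyA : ¬ S.IsOn y A) :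
    ∃ E σ', S.IsFirst σ' y E ∧ E ≠ A ∧ S.Above τ A E ∧ (E = B ∨ E ≠ B ∧ S.Above τ E B) := by
  obtain ⟨C, hC, hfirst⟩ | ⟨D, hD, hfirst, had, hdb⟩ := hc.isFirst_or_isFirst hAB hA hB hab
  · obtain rfl | rfl := hA.eq_or_eq hAB hB hC
    · exact absurd hfirst.1 hyA
    · exact ⟨C, σ, hfirst, hAB.symm, hab, Or.inl rfl⟩
  · exact ⟨D, -σ, hfirst, fun h => hD (h ▸ hA), had, Or.inr ⟨fun h => hD (h ▸ hB), hdb⟩⟩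

lemma Passes.above_of_not_passes (hX : S.Passes τ X y) (hB : S.Meets B y)
    (hB' : ¬ S.Passes τ B y) : S.Above τ X B := by
  obtain ⟨h, hh, hpos⟩ := hX
  obtain ⟨k, hk⟩ := hB
  have hle : τ * (k - (S.dir y).2) ≤ 0 := by
    by_contra! hlt
    exact hB' ⟨k, hk, hlt⟩
  exact ⟨_, h, k, fst_dir_ne_zero y, hh, hk, by linarith⟩

lemma IsLastEvent.eq_or_isOn [Finite Z] (hL : S.IsLastEvent σ z y) (hAB : A ≠ B)
    (hA : S.IsOn z A) (hB : S.IsOn z B) (hab : S.Above τ A B) (hX : S.IsNearest τ X y) :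
    A = X ∨ S.IsOn y A := by
  by_contra! hcon
  obtain ⟨hAX, hyA⟩ := hcon
  obtain ⟨E, σ', hE, hEA, hae, heb⟩ := hL.isEvent.exists_isFirst_between hAB hA hB hab hyA
  have hApass : S.Passes τ A y := by
    refine ((hL.meets hA).passes_or_passes hyA τ).resolve_right fun h => ?_
    exact above_asymm hEA (above_neg.1 (h.above hE.1)) hae
  have hBpass : ¬ S.Passes τ B y := by
    intro h
    obtain rfl | ⟨hne, heb⟩ := heb
    · exact hE.not_passes h
    · exact above_asymm hne heb (h.above hE.1)
  have hXB : X ≠ B := by rintro rfl; exact hBpass hX.1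
  have hXz : ¬ S.IsOn z X := fun h => (hA.eq_or_eq hAB hB h).elim hAX.symm hXB
  exact (squeeze hL hAB hA hB hab hXz (hX.2 A hAX hApass)
    (hX.1.above_of_not_passes (hL.meets hB) hBpass) hX.1.meets).not_passes hX.1

lemma IsLastEvent.exists_above [Finite Z] (hL : S.IsLastEvent σ z y) :
    ∃ A B, A ≠ B ∧ S.IsOn z A ∧ S.IsOn z B ∧ S.Above 1 A B := by
  have hA := isOn_side (S := S.toRaySystem) z true
  have hB := isOn_side (S := S.toRaySystem) z false
  have hAB : S.side z true ≠ S.side z false := fun h => by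
    simpa only [S.color_side, Bool.true_eq_false] using congrArg S.color h
  obtain h | h := (hL.meets hA).above_or_above hAB (hL.meets hB)
    fun hy => hL.ne (IsOn.contact_unique hAB hy.1 hy.2 hA hB)
  · exact ⟨_, _, hAB, hA, hB, h⟩
  · exact ⟨_, _, hAB.symm, hB, hA, h⟩

lemma IsLastEvent.exists_eq_or_isOn [Finite Z] (hL : S.IsLastEvent σ z y)
    (hX : S.IsNearest 1 X y) (hY : S.IsNearest (-1) Y y) :
    ∃ A B, A ≠ B ∧ S.IsOn z A ∧ S.IsOn z B ∧ S.Above 1 A B ∧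
      (A = X ∨ S.IsOn y A) ∧ (B = Y ∨ S.IsOn y B) := by
  obtain ⟨A, B, hAB, hA, hB, hab⟩ := hL.exists_above
  exact ⟨A, B, hAB, hA, hB, hab, hL.eq_or_isOn hAB hA hB hab hX,
    hL.eq_or_isOn hAB.symm hB hA (above_neg.2 hab) hY⟩

lemma IsLastEvent.not_isFirst_of_passes [Finite Z] (hL : S.IsLastEvent σ z y)
    (hX : S.Passes 1 X y) (hY : S.Passes (-1) Y y) (hXY : X ≠ Y) (hzX : S.IsOn z X)
    (hzY : S.IsOn z Y) (hyX : ¬ S.IsOn y X) (hyY : ¬ S.IsOn y Y) : ¬ S.IsFirst σ y C := by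
  intro hC
  have hCz : ¬ S.IsOn z C := fun h => by
    obtain rfl | rfl := hzX.eq_or_eq hXY hzY h
    exacts [hyX hC.1, hyY hC.1]
  exact hC.not_isFirst_neg (squeeze hL hXY hzX hzY (hX.above_of_passes_neg hY) hCz
    (hX.above hC.1) (above_neg.1 (hY.above hC.1)) (meets_of_isOn hC.1))

/-! ### Counting the contacts -/

lemma IsLastEvent.sign_unique (h : S.IsLastEvent σ z y) (h' : S.IsLastEvent τ z y) : σ = τ := by
  by_contra hne
  have h1 := h.isEvent.1
  rw [Int.units_ne_iff_eq_neg.1 hne, units_cast_neg] at h1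
  linarith [h'.isEvent.1]

variable (S) in
/-- The pairs of a direction and a region such that the sweep in that direction first meets the
region at `y`. -/
noncomputable def firsts [Fintype ι] (y : Z) : Finset (ℤˣ × ι) := {p | S.IsFirst p.1 y p.2}

variable (S) in
/-- The pairs of a direction `σ` and a contact `z` for which `y` is the last event before `z`. -/
noncomputable def successors [Fintype Z] (y : Z) : Finset (ℤˣ × Z) := {p | S.IsLastEvent p.1 p.2 y}

variable (S) in
/-- The number, zero or one, of contacts between `y` and `A` that are missing. -/
noncomputable def missing (y : Z) (A : ι) : ℕ := if S.IsOn y A then 0 else 1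

lemma mem_firsts [Fintype ι] : (σ, A) ∈ S.firsts y ↔ S.IsFirst σ y A := by simp [firsts]

lemma mem_successors [Fintype Z] : (σ, z) ∈ S.successors y ↔ S.IsLastEvent σ z y := by
  simp [successors]

lemma mem_image_snd_firsts [Finite Z] [Fintype ι] (hX : S.IsNearest 1 X y)
    (hY : S.IsNearest (-1) Y y) (hA : S.IsOn y A) (hAX : A ≠ X) (hAY : A ≠ Y) :
    A ∈ (S.firsts y).image Prod.snd := by
  suffices ∃ σ, S.IsFirst σ y A by
    obtain ⟨σ, h⟩ := this
    exact Finset.mem_image.2 ⟨(σ, A), mem_firsts.2 h, rfl⟩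
  by_contra! h
  obtain ⟨τ, hτ⟩ := exists_passes_of_isOn hA h
  obtain rfl | rfl := Int.units_eq_one_or τ
  exacts [hAX (hX.eq_of_passes hA hτ), hAY (hY.eq_of_passes hA hτ)]

lemma missing_add_missing_le_card_firsts [Finite Z] [Fintype ι] (hX : S.IsNearest 1 X y)
    (hY : S.IsNearest (-1) Y y) : S.missing y X + S.missing y Y ≤ (S.firsts y).card := by
  have hXY : X ≠ Y := fun h => hX.1.not_passes_neg (h ▸ hY.1)
  have hside : Function.Injective (S.side y) := fun b b' h => by
    rw [← S.color_side y b, h, S.color_side]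
  have hsub : Finset.univ.image (S.side y) ⊆
      (S.firsts y).image Prod.snd ∪ ({X, Y} : Finset ι).filter (S.IsOn y) := by
    intro A hA
    obtain ⟨b, -, rfl⟩ := Finset.mem_image.1 hA
    by_cases h : S.side y b ∈ ({X, Y} : Finset ι)
    · exact Finset.mem_union_right _ (Finset.mem_filter.2 ⟨h, isOn_side y b⟩)
    · simp only [Finset.mem_insert, Finset.mem_singleton, not_or] at h
      exact Finset.mem_union_left _ (mem_image_snd_firsts hX hY (isOn_side y b) h.1 h.2)
  have hcard := (Finset.card_le_card hsub).trans (Finset.card_union_le _ _)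
  rw [Finset.card_image_of_injective _ hside, Finset.card_univ, Fintype.card_bool,
    Finset.card_filter, Finset.sum_pair hXY] at hcard
  have := Finset.card_image_le (s := S.firsts y) (f := Prod.snd)
  unfold missing
  split_ifs at * <;> omega

lemma card_filter_successors_le_one [Fintype Z] {p : Z → Prop} [DecidablePred p]
    (h : ∀ z z', p z → p z' → z = z') : ((S.successors y).filter (p ·.2)).card ≤ 1 := by
  rw [Finset.card_le_one]
  rintro ⟨σ, z⟩ hz ⟨τ, z'⟩ hz'
  simp only [Finset.mem_filter, mem_successors] at hz hz'
  obtain rfl := h z z' hz.2 hz'.2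
  rw [hz.1.sign_unique hz'.1]

lemma card_adjacent_successors_le_missing [Fintype Z] (X : ι) :
    ((S.successors y).filter
      fun p => S.IsOn p.2 X ∧ ∃ E, E ≠ X ∧ S.IsOn p.2 E ∧ S.IsOn y E).card ≤ S.missing y X := by
  by_cases hX : S.IsOn y X
  · rw [missing, if_pos hX, Nat.le_zero, Finset.card_eq_zero, Finset.filter_eq_empty_iff]
    rintro ⟨σ, z⟩ hz ⟨hzX, E, hE, hzE, hyE⟩
    exact (mem_successors.1 hz).ne (IsOn.contact_unique hE hyE hX hzE hzX)
  · rw [missing, if_neg hX]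
    refine card_filter_successors_le_one
      (p := fun z => S.IsOn z X ∧ ∃ E, E ≠ X ∧ S.IsOn z E ∧ S.IsOn y E) fun z z' => ?_
    rintro ⟨hz, E, hE, hzE, hyE⟩ ⟨hz', E', hE', hzE', hyE'⟩
    exact hz.contact_unique_of_adjacent hz' hE hE' hzE hzE' hyE hyE'

lemma successors_subset [Fintype Z] (hX : S.IsNearest 1 X y) (hY : S.IsNearest (-1) Y y) :
    S.successors y ⊆
      (S.successors y).filter
          (fun p => S.IsOn p.2 X ∧ ∃ E, E ≠ X ∧ S.IsOn p.2 E ∧ S.IsOn y E) ∪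
        (S.successors y).filter
          (fun p => S.IsOn p.2 Y ∧ ∃ E, E ≠ Y ∧ S.IsOn p.2 E ∧ S.IsOn y E) ∪
        (S.successors y).filter
          (fun p => S.IsOn p.2 X ∧ S.IsOn p.2 Y ∧ ¬ S.IsOn y X ∧ ¬ S.IsOn y Y) := by
  rintro ⟨σ, z⟩ hz
  have hL := mem_successors.1 hz
  simp only [Finset.mem_union, Finset.mem_filter, hz, true_and]
  obtain ⟨A, B, hAB, hA, hB, -, hAX, hBY⟩ := hL.exists_eq_or_isOn hX hY
  by_cases hyA : S.IsOn y A <;> by_cases hyB : S.IsOn y B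
  · exact absurd (IsOn.contact_unique hAB hyA hyB hA hB) hL.ne
  · obtain rfl := hBY.resolve_right hyB
    exact Or.inl (Or.inr ⟨hB, A, hAB, hA, hyA⟩)
  · obtain rfl := hAX.resolve_right hyA
    exact Or.inl (Or.inl ⟨hA, B, hAB.symm, hB, hyB⟩)
  · obtain rfl := hAX.resolve_right hyA
    obtain rfl := hBY.resolve_right hyB
    exact Or.inr ⟨hA, hB, hyA, hyB⟩

lemma card_successors_add_card_image_fst_firsts_le [Fintype Z] [Fintype ι] (y : Z) :
    (S.successors y).card + ((S.firsts y).image Prod.fst).card ≤ 2 * (S.firsts y).card := by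
  obtain ⟨X, hX⟩ := exists_isNearest (S := S) 1 y
  obtain ⟨Y, hY⟩ := exists_isNearest (S := S) (-1) y
  have hXY : X ≠ Y := fun h => hX.1.not_passes_neg (h ▸ hY.1)
  have hfirsts := missing_add_missing_le_card_firsts hX hY
  have himage := Finset.card_image_le (s := S.firsts y) (f := Prod.fst)
  have hcard := Finset.card_le_card (successors_subset hX hY)
  have hunion := Finset.card_union_le (α := ℤˣ × Z)
  set spanning := (S.successors y).filter
    fun p => S.IsOn p.2 X ∧ S.IsOn p.2 Y ∧ ¬ S.IsOn y X ∧ ¬ S.IsOn y Y with hspanning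
  have hadjacent : (S.successors y).card ≤ S.missing y X + S.missing y Y + spanning.card :=
    hcard.trans <| (hunion _ _).trans <| Nat.add_le_add_right ((hunion _ _).trans <|
      Nat.add_le_add (card_adjacent_successors_le_missing X)
        (card_adjacent_successors_le_missing Y)) _
  obtain hempty | ⟨⟨σ, z⟩, hz⟩ := spanning.eq_empty_or_nonempty
  · rw [hempty, Finset.card_empty] at hadjacent
    omega
  have hone : spanning.card ≤ 1 := card_filter_successors_le_one
    (S := S) (y := y) (p := fun z => S.IsOn z X ∧ S.IsOn z Y ∧ ¬ S.IsOn y X ∧ ¬ S.IsOn y Y)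
    fun z z' hz hz' => hz.1.contact_unique hXY hz.2.1 hz'.1 hz'.2.1
  rw [hspanning, Finset.mem_filter, mem_successors] at hz
  obtain ⟨hL, hzX, hzY, hyX, hyY⟩ := hz
  have hσ : σ ∉ (S.firsts y).image Prod.fst := fun h => by
    obtain ⟨⟨σ, C⟩, hC, rfl⟩ := Finset.mem_image.1 h
    exact hL.not_isFirst_of_passes hX.1 hY.1 hXY hzX hzY hyX hyY (mem_firsts.1 hC)
  have hlt := Finset.card_lt_univ_of_notMem hσ
  rw [Fintype.card_units_int] at hlt
  rw [missing, missing, if_neg hyX, if_neg hyY] at hfirsts hadjacent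
  omega

/-- The contact to which `z` is charged by the sweep in direction `σ`: `z` itself if some region
begins there, and otherwise the last event before `z`. -/
def IsSource (S : SweepSystem Z ι) (σ : ℤˣ) (z y : Z) : Prop :=
  (y = z ∧ ∃ A, S.IsFirst σ z A) ∨ S.IsLastEvent σ z y

lemma exists_isSource [Finite Z] (σ : ℤˣ) (z : Z) : ∃ y, S.IsSource σ z y := by
  by_cases! h : ∃ A, S.IsFirst σ z A
  · exact ⟨z, Or.inl ⟨rfl, h⟩⟩
  · exact (exists_isLastEvent h).imp fun y => Or.inr

lemma card_isSource_le [Fintype Z] [Fintype ι] (y : Z) :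
    (Finset.univ.filter fun p : ℤˣ × Z => S.IsSource p.1 p.2 y).card ≤
      2 * (S.firsts y).card := by
  refine le_trans ?_ (card_successors_add_card_image_fst_firsts_le y)
  have hsub : (Finset.univ.filter fun p : ℤˣ × Z => S.IsSource p.1 p.2 y) ⊆
      S.successors y ∪ ((S.firsts y).image Prod.fst).image (·, y) := by
    rintro ⟨σ, z⟩ hz
    obtain ⟨rfl, A, hA⟩ | hL := (Finset.mem_filter.1 hz).2
    · exact Finset.mem_union_right _ (Finset.mem_image_of_mem _
        (Finset.mem_image.2 ⟨(σ, A), mem_firsts.2 hA, rfl⟩))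
    · exact Finset.mem_union_left _ (mem_successors.2 hL)
  exact (Finset.card_le_card hsub).trans <| (Finset.card_union_le _ _).trans <|
    Nat.add_le_add_left Finset.card_image_le _

lemma sum_card_firsts_add_four_le [Fintype Z] [Fintype ι] :
    ∑ y, (S.firsts y).card + 4 ≤ 2 * Fintype.card ι := by
  have hinj : Set.InjOn (fun p : (_ : Z) × (ℤˣ × ι) => p.2)
      (Finset.univ.sigma S.firsts : Finset ((_ : Z) × (ℤˣ × ι))) := by
    rintro ⟨y, σ, A⟩ hy ⟨z, τ, B⟩ hz h
    obtain ⟨rfl, rfl⟩ := Prod.mk.inj h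
    obtain rfl : y = z := (mem_firsts.1 (Finset.mem_sigma.1 hy).2).contact_unique
      (mem_firsts.1 (Finset.mem_sigma.1 hz).2)
    rfl
  have hsub : (Finset.univ.sigma S.firsts).image (fun p => p.2) ⊆
      Finset.univ ×ˢ (Finset.univ.image S.pole)ᶜ := by
    intro p hp
    obtain ⟨⟨y, σ, A⟩, hq, rfl⟩ := Finset.mem_image.1 hp
    have := (mem_firsts.1 (Finset.mem_sigma.1 hq).2).2.1
    simpa only [Finset.mem_product, Finset.mem_univ, true_and, Finset.mem_compl, Finset.mem_image,
      not_exists] using this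
  have hcard := Finset.card_le_card hsub
  have hpole : (Finset.univ.image S.pole).card = 2 := by
    rw [Finset.card_image_of_injective _ pole_injective, Finset.card_univ, Fintype.card_units_int]
  have := Finset.card_le_univ (Finset.univ.image S.pole)
  rw [Finset.card_image_of_injOn hinj, Finset.card_sigma, Finset.card_product, Finset.card_univ,
    Fintype.card_units_int, Finset.card_compl, hpole] at hcard
  omega

theorem card_contacts_add_four_le [Fintype Z] [Fintype ι] (S : SweepSystem Z ι) :
    Fintype.card Z + 4 ≤ 2 * Fintype.card ι := by
  choose source hsource using fun p : ℤˣ × Z => exists_isSource (S := S) p.1 p.2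
  have hfibres : Fintype.card (ℤˣ × Z) ≤ ∑ y, 2 * (S.firsts y).card := by
    rw [← Finset.card_univ, Finset.card_eq_sum_card_fiberwise
      (f := source) (t := Finset.univ) fun _ _ => Finset.mem_coe.2 (Finset.mem_univ _)]
    refine Finset.sum_le_sum fun y _ => le_trans (Finset.card_le_card ?_) (card_isSource_le y)
    exact Finset.monotone_filter_right _ fun p _ hp => hp ▸ hsource p
  rw [Fintype.card_prod, Fintype.card_units_int, ← Finset.mul_sum] at hfibres
  have := sum_card_firsts_add_four_le (S := S)
  omega

end SweepSystem

/-! ### Vertical axes in general position -/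

namespace ContactSystem

open RaySystem

variable {Z ι H H' : Type*} [AddCommGroup H] [Module ℝ H] [AddCommGroup H'] [Module ℝ H']
  (S : ContactSystem Z ι H) (Φ : H ≃ₗ[ℝ] H') {z z' : Z} {A B : ι} {w : H'}

lemma eq_of_dir_eq_smul {c : ℝ} (hc : 0 < c) (h : S.dir z' = c • S.dir z) : z = z' := by
  refine S.side_injective (funext fun b => ?_)
  by_contra hne
  have hz' := dir_mem_cone (S.isOn_side z' b)
  rw [h] at hz'
  obtain ⟨x, hx, hx', -⟩ := S.exists_contact_of_mem_inf _ _ hne _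
    (PointedCone.smul_mem _ hc.le (dir_mem_cone (S.isOn_side z b))) hz'
    (smul_ne_zero hc.ne' (S.dir_ne_zero z))
  exact hne (hx.eq_of_color_eq hx' (by rw [S.color_side, S.color_side]))

lemma mem_cone_map :
    w ∈ RaySystem.cone { S.toRaySystem with dir := fun z => Φ (S.dir z) } A ↔
      Φ.symm w ∈ S.cone A := by
  have h : RaySystem.cone { S.toRaySystem with dir := fun z => Φ (S.dir z) } A =
      PointedCone.map Φ (S.cone A) := by
    rw [cone, cone, PointedCone.map, Submodule.map_span, ← Set.image_comp]
    rfl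
  rw [h, PointedCone.mem_map]
  exact ⟨by rintro ⟨v, hv, rfl⟩; simpa using hv, fun hw => ⟨_, hw, Φ.apply_symm_apply w⟩⟩

/-- Transport of a contact system along a linear equivalence. -/
def map : ContactSystem Z ι H' where
  __ := S.toRaySystem
  dir z := Φ (S.dir z)
  dir_ne_zero z := by simpa using S.dir_ne_zero z
  nontrivial := S.nontrivial
  salient A w hw hw' := by
    rw [mem_cone_map] at hw hw'
    rw [map_neg] at hw'
    simpa using S.salient A _ hw hw'
  exists_contact_of_mem_inf A B hAB w hA hB hw := by
    rw [mem_cone_map] at hA hB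
    obtain ⟨z, hzA, hzB, c, hc, h⟩ :=
      S.exists_contact_of_mem_inf A B hAB _ hA hB (by simpa using hw)
    exact ⟨z, hzA, hzB, c, hc, by rw [← map_smul, ← h, Φ.apply_symm_apply]⟩
  extreme A z hz w hw w' hw' c h := by
    rw [mem_cone_map] at hw hw'
    obtain ⟨d, hd, h⟩ := S.extreme A z hz _ hw _ hw' c (by
      rw [← map_add, h, map_smul, Φ.symm_apply_apply])
    exact ⟨d, hd, by rw [← map_smul, ← h, Φ.apply_symm_apply]⟩

end ContactSystem

section GeneralPosition

variable {H : Type*} [AddCommGroup H] [Module ℝ H] {n : ℕ} (b : Module.Basis (Fin n) ℝ H)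

lemma exists_pos_forall_sum_pow_smul_notMem {κ : Type*} [Finite κ] (W : κ → Submodule ℝ H)
    (hW : ∀ i, W i < ⊤) : ∃ t : ℝ, 0 < t ∧ ∀ i, ∑ k : Fin n, t ^ (k : ℕ) • b k ∉ W i := by
  have := Fintype.ofFinite κ
  choose f hf hWf using fun i => Submodule.exists_le_ker_of_lt_top (W i) (hW i)
  let q (i : κ) : Polynomial ℝ := ∑ k : Fin n, Polynomial.monomial (k : ℕ) (f i (b k))
  have hq (i : κ) : q i ≠ 0 := fun h0 => hf i <| b.ext fun k => by
    have := congrArg (Polynomial.coeff · k) h0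
    simpa [q, Polynomial.coeff_monomial, Fin.val_inj] using this
  obtain ⟨t, ht, hroot⟩ := (Set.Ioi_infinite (0 : ℝ)).exists_notMem_finset
    (Finset.univ.biUnion fun i => (q i).roots.toFinset)
  refine ⟨t, ht, fun i hi => hroot (Finset.mem_biUnion.2 ⟨i, Finset.mem_univ i, ?_⟩)⟩
  rw [Multiset.mem_toFinset, Polynomial.mem_roots (hq i), Polynomial.IsRoot]
  have := LinearMap.mem_ker.1 (hWf i hi)
  simpa [q, Polynomial.eval_finsetSum, mul_comm] using this

lemma exists_add_smul_mem_of_basis {C : PointedCone ℝ H} (hb : ∀ k, b k ∈ C) {a : Fin n → ℝ}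
    (ha : ∀ k, 0 < a k) (w : H) : ∃ s : ℝ, 0 < s ∧ w + s • ∑ k, a k • b k ∈ C := by
  refine ⟨1 + ∑ k, |b.repr w k| / a k,
    add_pos_of_pos_of_nonneg one_pos (Finset.sum_nonneg fun k _ => by have := ha k; positivity), ?_⟩
  set s := 1 + ∑ k, |b.repr w k| / a k
  have hsum : w + s • ∑ k, a k • b k = ∑ k, (b.repr w k + s * a k) • b k := by
    simp only [add_smul, Finset.sum_add_distrib, b.sum_repr, Finset.smul_sum, mul_smul]
  rw [hsum]
  refine sum_mem fun k _ => PointedCone.smul_mem _ ?_ (hb k)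
  have hk : |b.repr w k| / a k ≤ s := by
    have := Finset.single_le_sum (f := fun k => |b.repr w k| / a k)
      (fun k _ => by have := ha k; positivity) (Finset.mem_univ k)
    linarith
  rw [div_le_iff₀ (ha k)] at hk
  linarith [neg_abs_le (b.repr w k)]

lemma exists_eq_smul_of_planeCross_eq_zero {p q : ℝ × ℝ} (hp : p ≠ 0)
    (h : planeCross p q = 0) : ∃ d : ℝ, q = d • p := by
  rw [planeCross_apply] at h
  by_cases h1 : p.1 = 0
  · have h2 : p.2 ≠ 0 := fun h2 => hp (Prod.ext h1 h2)
    refine ⟨q.2 / p.2, Prod.ext ?_ ?_⟩ <;> simp only [Prod.smul_fst, Prod.smul_snd, smul_eq_mul] <;>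
      field_simp
    linarith
  · refine ⟨q.1 / p.1, Prod.ext ?_ ?_⟩ <;> simp only [Prod.smul_fst, Prod.smul_snd, smul_eq_mul] <;>
      field_simp
    linarith

lemma exists_eq_smul_of_notMem_span {N u v : H} (Φ : H ≃ₗ[ℝ] Space) (hΦ : Φ N = (0, 1))
    (hN : N ∉ Submodule.span ℝ {u, v}) (hu : u ≠ 0) (h : planeCross (Φ u).1 (Φ v).1 = 0) :
    ∃ d : ℝ, v = d • u := by
  have hvertical : ∀ w ∈ Submodule.span ℝ {u, v}, (Φ w).1 = 0 → w = 0 := by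
    intro w hw h0
    have hwN : w = (Φ w).2 • N := Φ.injective (by
      rw [map_smul, hΦ]
      ext <;> simp [h0])
    by_contra hne
    have h2 : (Φ w).2 ≠ 0 := fun h2 => hne (by rw [hwN, h2, zero_smul])
    rw [hwN, Submodule.smul_mem_iff _ h2] at hw
    exact hN hw
  have hu_mem : u ∈ Submodule.span ℝ {u, v} := Submodule.subset_span (Or.inl rfl)
  have hv_mem : v ∈ Submodule.span ℝ {u, v} := Submodule.subset_span (Or.inr rfl)
  obtain ⟨d, hd⟩ := exists_eq_smul_of_planeCross_eq_zero (mt (hvertical u hu_mem) hu) h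
  refine ⟨d, sub_eq_zero.1 (hvertical _ (sub_mem hv_mem (Submodule.smul_mem _ d hu_mem)) ?_)⟩
  rw [map_sub, map_smul, Prod.fst_sub, Prod.smul_fst, hd, sub_self]

lemma exists_linearEquiv_space (b : Module.Basis (Fin 3) ℝ H) {N : H} (hN : N ≠ 0) :
    ∃ Φ : H ≃ₗ[ℝ] Space, Φ N = (0, 1) := by
  have := b.finiteDimensional_of_finite
  let e : H ≃ₗ[ℝ] Space := LinearEquiv.ofFinrankEq _ _ (by
    simp [Module.finrank_eq_card_basis b])
  obtain ⟨ψ, hψ⟩ := SeparatingDual.exists_continuousLinearEquiv_apply_eq (R := ℝ)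
    ((map_ne_zero_iff e e.injective).2 hN) (y := ((0, 1) : Space)) (by simp)
  exact ⟨e.trans ψ.toLinearEquiv, hψ⟩

end GeneralPosition

namespace ContactSystem

open RaySystem

variable {Z ι H : Type*} [AddCommGroup H] [Module ℝ H] (S : ContactSystem Z ι H) {A B : ι}

lemma exists_generic [Finite Z] (b : Module.Basis (Fin 3) ℝ H) (hb : ∀ k, b k ∈ S.cone A) :
    ∃ Φ : H ≃ₗ[ℝ] Space,
      (∀ w, ∃ s : ℝ, 0 < s ∧ w + (0, s) ∈ (S.map Φ).cone A) ∧
      ∀ z z', z ≠ z' → planeCross (Φ (S.dir z)).1 (Φ (S.dir z')).1 = 0 →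
        ∃ c < (0 : ℝ), Φ (S.dir z') = c • Φ (S.dir z) := by
  have hspan : ∀ u v : H, Submodule.span ℝ {u, v} < ⊤ := fun u v => by
    have := b.finiteDimensional_of_finite
    have hcard := (finrank_span_finset_le_card (R := ℝ) ({u, v} : Finset H)).trans
      Finset.card_le_two
    rw [Finset.coe_pair] at hcard
    refine Submodule.lt_top_of_finrank_lt_finrank (lt_of_le_of_lt hcard ?_)
    rw [Module.finrank_eq_card_basis b, Fintype.card_fin]
    exact Nat.lt_succ_self 2
  obtain ⟨t, ht, hN⟩ := exists_pos_forall_sum_pow_smul_notMem b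
    (fun p : Option (Z × Z) => p.elim ⊥ fun p => Submodule.span ℝ {S.dir p.1, S.dir p.2}) (by
      rintro (_ | p)
      exacts [bot_le.trans_lt (hspan 0 0), hspan _ _])
  set N := ∑ k : Fin 3, t ^ (k : ℕ) • b k
  obtain ⟨Φ, hΦ⟩ := exists_linearEquiv_space b (hN none)
  refine ⟨Φ, fun w => ?_, fun z z' hne h => ?_⟩
  · obtain ⟨s, hs, hmem⟩ := exists_add_smul_mem_of_basis b hb
      (fun k => pow_pos ht (k : ℕ)) (Φ.symm w)
    refine ⟨s, hs, (S.mem_cone_map Φ).2 ?_⟩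
    convert hmem using 1
    apply Φ.injective
    rw [Φ.apply_symm_apply, map_add, Φ.apply_symm_apply, map_smul, hΦ]
    simp
  · obtain ⟨d, hd⟩ := exists_eq_smul_of_notMem_span Φ hΦ (hN (some (z, z'))) (S.dir_ne_zero z) h
    refine ⟨d, lt_of_not_ge fun hd0 => ?_, by rw [hd, map_smul]⟩
    obtain rfl | hd0 := hd0.eq_or_lt
    · exact S.dir_ne_zero z' (by rw [hd, zero_smul])
    · exact hne (S.eq_of_dir_eq_smul hd0 hd)

lemma eq_zero_of_sum_smul_dir_eq_zero {κ : Type*} [Fintype κ] {z : κ → Z}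
    (hz : Function.Injective z) (hA : ∀ k, S.IsOn (z k) A) {g : κ → ℝ} {k : κ}
    (hg : ∀ l, l ≠ k → 0 ≤ g l) (hsum : ∑ l, g l • S.dir (z l) = 0) : g = 0 := by
  have hterm : ∀ l, l ≠ k → g l • S.dir (z l) ∈ S.cone A := fun l hl =>
    PointedCone.smul_mem _ (hg l hl) (dir_mem_cone (hA l))
  have hne : ∀ l, l ≠ k → g l = 0 := by
    intro l hl
    obtain ⟨d, hd, h⟩ := S.extreme A (z k) (hA k) _ (hterm l hl)
      (∑ m ∈ (Finset.univ.erase k).erase l, g m • S.dir (z m))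
      (sum_mem fun m hm => hterm m (Finset.ne_of_mem_erase (Finset.mem_of_mem_erase hm))) (-g k) (by
        rw [Finset.add_sum_erase _ (fun m => g m • S.dir (z m))
          (Finset.mem_erase.2 ⟨hl, Finset.mem_univ l⟩), neg_smul, ← add_eq_zero_iff_eq_neg,
          Finset.sum_erase_add _ _ (Finset.mem_univ k), hsum])
    by_contra hgl
    have hgl : 0 < g l := (hg l hl).lt_of_ne' hgl
    have hdir : S.dir (z l) = ((g l)⁻¹ * d) • S.dir (z k) := by
      rw [mul_smul, ← h, inv_smul_smul₀ hgl.ne']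
    obtain rfl | hd := hd.eq_or_lt
    · exact S.dir_ne_zero (z l) (by rw [hdir, mul_zero, zero_smul])
    · exact hl (hz (S.eq_of_dir_eq_smul (by positivity) hdir)).symm
  ext l
  obtain rfl | hl := eq_or_ne l k
  · rw [Finset.sum_eq_single l (fun m _ hm => by rw [hne m hm, zero_smul]) (by simp)] at hsum
    exact (smul_eq_zero.1 hsum).resolve_right (S.dir_ne_zero (z l))
  · exact hne l hl

lemma linearIndependent_dir {z : Fin 3 → Z} (hz : Function.Injective z)
    (hA : ∀ k, S.IsOn (z k) A) : LinearIndependent ℝ fun k => S.dir (z k) := by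
  refine Fintype.linearIndependent_iff.2 fun g hsum => congrFun ?_
  have hsign : ∃ k, (∀ l, l ≠ k → 0 ≤ g l) ∨ ∀ l, l ≠ k → g l ≤ 0 := by
    simp only [Fin.exists_fin_succ, Fin.forall_fin_succ]
    grind
  obtain ⟨k, hg | hg⟩ := hsign
  · exact S.eq_zero_of_sum_smul_dir_eq_zero hz hA hg hsum
  · exact neg_eq_zero.1 <| S.eq_zero_of_sum_smul_dir_eq_zero hz hA (g := -g) (k := k)
      (fun l hl => neg_nonneg.2 (hg l hl)) (by simp [Finset.sum_neg_distrib, hsum])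

theorem card_contacts_add_four_le [Fintype Z] [Fintype ι] (hH : Module.finrank ℝ H = 3)
    {z : Fin 3 → Z} (hz : Function.Injective z) (hzA : ∀ k, S.IsOn (z k) A)
    (hneg : ∀ w ∈ S.cone A, -w ∈ S.cone B) (hAB : ∀ z, ¬ (S.IsOn z A ∧ S.IsOn z B)) :
    Fintype.card Z + 4 ≤ 2 * Fintype.card ι := by
  let b := basisOfLinearIndependentOfCardEqFinrank (S.linearIndependent_dir hz hzA) (by simp [hH])
  have hb : ∀ k, b k ∈ S.cone A := fun k => by
    simpa only [b, coe_basisOfLinearIndependentOfCardEqFinrank] using dir_mem_cone (hzA k)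
  obtain ⟨Φ, hpole, hgeneric⟩ := S.exists_generic b hb
  let T : SweepSystem Z ι :=
    { S.map Φ with
      pole := fun τ => if τ = 1 then A else B
      exists_add_vertical_mem := fun τ w => by
        obtain rfl | rfl := Int.units_eq_one_or τ
        · simpa using hpole w
        · obtain ⟨s, hs, h⟩ := hpole (-w)
          refine ⟨s, hs, (S.mem_cone_map Φ).2 ?_⟩
          rw [if_neg (by decide)]
          convert hneg _ ((S.mem_cone_map Φ).1 h) using 1
          rw [← map_neg]
          congr 1
          ext <;> simp [add_comm]
      not_isOn_poles := hAB
      generic := hgeneric }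
  exact T.card_contacts_add_four_le

end ContactSystem

/-! ### Points of a sphere at angles at most `π / 3` -/

lemma exists_norm_smul_add_half_smul_eq_one {E : Type*}
    [NormedAddCommGroup E] [InnerProductSpace ℝ E] {p M : E} {a : ℝ} (hp : ‖p‖ = 1)
    (hMp : ⟪M, p⟫_ℝ = a / 2) (hM : ‖M‖ ≤ a) (hne : M - (a / 2) • p ≠ 0) :
    ∃ l : ℝ, 0 < l ∧ 1 ≤ l * a ∧ ‖l • (M - (a / 2) • p) + (1 / 2 : ℝ) • p‖ = 1 := by
  set N := M - (a / 2) • p with hN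
  have hNp : ⟪N, p⟫_ℝ = 0 := by
    rw [hN, inner_sub_left, real_inner_smul_left, inner_self_eq_one_of_norm_eq_one hp, hMp]
    ring
  have hNsq : ‖N‖ ^ 2 = ‖M‖ ^ 2 - a ^ 2 / 4 := by
    rw [hN, norm_sub_sq_real, real_inner_smul_right, hMp, norm_smul, hp, Real.norm_eq_abs,
      mul_one, sq_abs]
    ring
  have _ : 0 < ‖N‖ := norm_pos_iff.2 hne
  have ha : 0 ≤ a := (norm_nonneg M).trans hM
  have hNa : 2 * ‖N‖ ≤ √3 * a := by
    refine (sq_le_sq₀ (by positivity) (by positivity)).1 ?_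
    have hMa : ‖M‖ ^ 2 ≤ a ^ 2 := by gcongr
    rw [mul_pow, mul_pow, Real.sq_sqrt (by norm_num)]
    linarith
  have hl : 0 < √3 / (2 * ‖N‖) := by positivity
  refine ⟨√3 / (2 * ‖N‖), hl, ?_, (sq_eq_sq₀ (norm_nonneg _) zero_le_one).1 ?_⟩
  · rwa [div_mul_eq_mul_div, one_le_div (by positivity)]
  · have hlN : √3 / (2 * ‖N‖) * ‖N‖ = √3 / 2 := by field_simp
    rw [norm_add_sq_real, real_inner_smul_left, real_inner_smul_right, hNp, norm_smul, norm_smul,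
      hp, Real.norm_of_nonneg hl.le, hlN, div_pow, Real.sq_sqrt (by norm_num)]
    norm_num

/-- Unit vectors pairwise at angle at most `π / 3`, each of them at angle exactly `π / 3` from at
least three others, with a distinguished vector from which the others are viewed. -/
structure SphericalConfig (E V : Type*) [NormedAddCommGroup E] [InnerProductSpace ℝ E] where
  vec : V → E
  norm_vec : ∀ i, ‖vec i‖ = 1
  half_le_inner : ∀ i j, 1 / 2 ≤ ⟪vec i, vec j⟫_ℝ
  vec_injective : Function.Injective vec
  exists_neighbors : ∀ i, ∃ f : Fin 3 → V, Function.Injective f ∧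
    ∀ k, ⟪vec i, vec (f k)⟫_ℝ = 1 / 2
  base : V

namespace SphericalConfig

variable {E V : Type*} [NormedAddCommGroup E] [InnerProductSpace ℝ E] (G : SphericalConfig E V)

/-- The cosine of the angle between a vector of the configuration and the base vector. -/
noncomputable def height (i : V) : ℝ := ⟪G.vec G.base, G.vec i⟫_ℝ

/-- The hyperplane orthogonal to the base vector. -/
noncomputable abbrev Tangent : Submodule ℝ E := (ℝ ∙ G.vec G.base)ᗮ

/-- Ordered pairs of vectors of the configuration at angle `π / 3`. -/
abbrev Contact := {z : V × V // ⟪G.vec z.1, G.vec z.2⟫_ℝ = 1 / 2}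

/-- The contact with its two ends exchanged. -/
def swap (z : G.Contact) : G.Contact := ⟨z.1.swap, by rw [real_inner_comm]; exact z.2⟩

/-- A positive multiple of the direction in which the second end of a contact is seen from the
first, under central projection to the hyperplane at height `1` over the base vector. -/
noncomputable def direction (z : G.Contact) : G.Tangent :=
  ⟨G.height z.1.1 • G.vec z.1.2 - G.height z.1.2 • G.vec z.1.1, by
    rw [Submodule.mem_orthogonal_singleton_iff_inner_right, inner_sub_right, real_inner_smul_right,
      real_inner_smul_right, height, height, mul_comm, sub_self]⟩

/-- Each vector `i` of the configuration carries two regions: `(i, true)` is spanned by the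
directions of the contacts leaving `i`, and `(i, false)` by those of the contacts entering it. -/
noncomputable def raySystem : RaySystem G.Contact (V × Bool) G.Tangent where
  color := Prod.snd
  side z b := (if b then z.1.1 else z.1.2, b)
  color_side _ _ := rfl
  side_injective z z' h := by
    have h1 := congrArg Prod.fst (congrFun h true)
    have h2 := congrArg Prod.fst (congrFun h false)
    exact Subtype.ext (Prod.ext h1 h2)
  dir := G.direction

variable {G} {i j : V} {z : G.Contact} {w w' : G.Tangent} {y y' : E}

lemma inner_vec_self (i : V) : ⟪G.vec i, G.vec i⟫_ℝ = 1 :=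
  inner_self_eq_one_of_norm_eq_one (G.norm_vec i)

lemma inner_vec_lt_one (h : i ≠ j) : ⟪G.vec i, G.vec j⟫_ℝ < 1 :=
  (inner_lt_one_iff_real_of_norm_eq_one (G.norm_vec i) (G.norm_vec j)).2 (G.vec_injective.ne h)

lemma height_pos (i : V) : 0 < G.height i := one_half_pos.trans_le (G.half_le_inner G.base i)

lemma exists_neighbor_ne (i j : V) : ∃ k, k ≠ i ∧ ⟪G.vec j, G.vec k⟫_ℝ = 1 / 2 := by
  obtain ⟨f, hf, h⟩ := G.exists_neighbors j
  obtain h0 | h0 := eq_or_ne (f 0) i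
  · exact ⟨f 1, fun h1 => zero_ne_one (hf (h0.trans h1.symm)), h 1⟩
  · exact ⟨f 0, h0, h 0⟩

lemma inner_base (w : G.Tangent) : ⟪G.vec G.base, (w : E)⟫_ℝ = 0 :=
  Submodule.mem_orthogonal_singleton_iff_inner_right.1 w.2

lemma direction_swap (z : G.Contact) : G.direction (G.swap z) = -G.direction z :=
  Subtype.ext (neg_sub _ _).symm

lemma isOn_true : G.raySystem.IsOn z (i, true) ↔ z.1.1 = i := by
  simp [RaySystem.IsOn, raySystem]

lemma isOn_false : G.raySystem.IsOn z (i, false) ↔ z.1.2 = i := by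
  simp [RaySystem.IsOn, raySystem]

lemma direction_ne_zero (z : G.Contact) : G.direction z ≠ 0 := by
  intro h
  have h1 := congrArg (fun w : G.Tangent => ⟪G.vec z.1.1, (w : E)⟫_ℝ) h
  have h2 := congrArg (fun w : G.Tangent => ⟪G.vec z.1.2, (w : E)⟫_ℝ) h
  simp only [direction, inner_sub_right, real_inner_smul_right, inner_vec_self, z.2,
    real_inner_comm (G.vec z.1.1) (G.vec z.1.2), ZeroMemClass.coe_zero, inner_zero_right] at h1 h2
  linarith [height_pos (G := G) z.1.1]

lemma neg_mem_cone {A B : V × Bool}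
    (hAB : ∀ z, G.raySystem.IsOn z A → G.raySystem.IsOn (G.swap z) B)
    (hw : w ∈ G.raySystem.cone A) : -w ∈ G.raySystem.cone B := by
  have hle : G.raySystem.cone A ≤
      (G.raySystem.cone B).comap (-LinearMap.id : G.Tangent →ₗ[ℝ] G.Tangent) := by
    refine Submodule.span_le.2 ?_
    rintro _ ⟨z, hz, rfl⟩
    have hmem : G.direction (G.swap z) ∈ _ := RaySystem.dir_mem_cone (hAB z hz)
    rwa [direction_swap] at hmem
  exact hle hw

lemma neg_mem_cone_true : -w ∈ G.raySystem.cone (i, true) ↔ w ∈ G.raySystem.cone (i, false) := by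
  refine ⟨fun h => ?_, neg_mem_cone fun z hz => isOn_true.2 (isOn_false.1 hz)⟩
  rw [← neg_neg w]
  exact neg_mem_cone (fun z hz => isOn_false.2 (isOn_true.1 hz)) h

lemma neg_mem_cone_false : -w ∈ G.raySystem.cone (i, false) ↔ w ∈ G.raySystem.cone (i, true) := by
  rw [← neg_mem_cone_true, neg_neg]

lemma exists_eq_sub_smul_vec (hw : w ∈ G.raySystem.cone (i, true)) :
    ∃ (M : E) (a s : ℝ), (w : E) = M - s • G.vec i ∧ ⟪M, G.vec i⟫_ℝ = a / 2 ∧ ‖M‖ ≤ a ∧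
      ∀ q, (∀ k, 1 / 2 ≤ ⟪G.vec k, q⟫_ℝ) → a / 2 ≤ ⟪M, q⟫_ℝ := by
  induction hw using Submodule.span_induction with
  | mem _ h =>
    obtain ⟨z, hz, rfl⟩ := h
    obtain rfl := isOn_true.1 hz
    refine ⟨G.height z.1.1 • G.vec z.1.2, G.height z.1.1, G.height z.1.2, rfl, ?_, ?_, ?_⟩
    · rw [real_inner_smul_left, real_inner_comm, z.2, mul_one_div]
    · rw [norm_smul, G.norm_vec, mul_one, Real.norm_of_nonneg (height_pos _).le]
    · intro q hq
      rw [real_inner_smul_left, ← mul_one_div]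
      exact mul_le_mul_of_nonneg_left (hq _) (height_pos _).le
  | zero => exact ⟨0, 0, 0, by simp, by simp, by simp, by simp⟩
  | add w w' _ _ ih ih' =>
    obtain ⟨M, a, s, hw, hi, hM, hq⟩ := ih
    obtain ⟨M', a', s', hw', hi', hM', hq'⟩ := ih'
    refine ⟨M + M', a + a', s + s', ?_, ?_, (norm_add_le M M').trans (add_le_add hM hM'), ?_⟩
    · rw [Submodule.coe_add, hw, hw']
      module
    · rw [inner_add_left, hi, hi', add_div]
    · intro q h
      rw [inner_add_left, add_div]
      exact add_le_add (hq q h) (hq' q h)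
  | smul r w _ ih =>
    obtain ⟨r, hr⟩ := r
    obtain ⟨M, a, s, hw, hi, hM, hq⟩ := ih
    refine ⟨r • M, r * a, r * s, ?_, ?_, ?_, ?_⟩
    · rw [Nonneg.mk_smul, Submodule.coe_smul, hw, smul_sub, smul_smul]
    · rw [real_inner_smul_left, hi, mul_div_assoc]
    · rw [norm_smul, Real.norm_of_nonneg hr]
      exact mul_le_mul_of_nonneg_left hM hr
    · intro q h
      rw [real_inner_smul_left, mul_div_assoc]
      exact mul_le_mul_of_nonneg_left (hq q h) hr

variable (G) in
/-- The unit vector `y` lies at angle `π / 3` from vector `i` of the configuration, and in every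
spherical cap of angular radius `π / 3` that contains the whole configuration. -/
structure IsHullPoint (i : V) (y : E) : Prop where
  norm_eq_one : ‖y‖ = 1
  inner_vec : ⟪y, G.vec i⟫_ℝ = 1 / 2
  half_le_inner : ∀ q, ‖q‖ = 1 → (∀ k, 1 / 2 ≤ ⟪G.vec k, q⟫_ℝ) → 1 / 2 ≤ ⟪y, q⟫_ℝ

namespace IsHullPoint

lemma half_le_inner_vec (hy : G.IsHullPoint i y) (k : V) : 1 / 2 ≤ ⟪y, G.vec k⟫_ℝ :=
  hy.half_le_inner _ (G.norm_vec k) fun j => G.half_le_inner j k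

lemma half_le_inner_hullPoint (hy : G.IsHullPoint i y) (hy' : G.IsHullPoint j y') :
    1 / 2 ≤ ⟪y, y'⟫_ℝ :=
  hy.half_le_inner _ hy'.norm_eq_one fun k => by
    rw [real_inner_comm]
    exact hy'.half_le_inner_vec k

lemma inner_vec_le_one (hy : G.IsHullPoint i y) (k : V) : ⟪y, G.vec k⟫_ℝ ≤ 1 :=
  real_inner_le_one_of_norm_eq_one hy.norm_eq_one (G.norm_vec k)

lemma inner_self (hy : G.IsHullPoint i y) : ⟪y, y⟫_ℝ = 1 :=
  inner_self_eq_one_of_norm_eq_one hy.norm_eq_one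

lemma eq_vec (hy : G.IsHullPoint i y) (h : 1 ≤ ⟪y, G.vec j⟫_ℝ) : y = G.vec j :=
  (inner_eq_one_iff_of_norm_eq_one hy.norm_eq_one (G.norm_vec j)).1
    ((hy.inner_vec_le_one j).antisymm h)

end IsHullPoint

lemma exists_isHullPoint (hw : w ∈ G.raySystem.cone (i, true)) (hne : w ≠ 0) :
    ∃ l μ : ℝ, 0 < l ∧ 0 < μ ∧ G.IsHullPoint i (l • (w : E) + μ • G.vec i) := by
  obtain ⟨M, a, s, hwM, hMi, hMa, hMq⟩ := exists_eq_sub_smul_vec hw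
  have hN : M - (a / 2) • G.vec i ≠ 0 := by
    intro h
    have hwi : (w : E) = (a / 2 - s) • G.vec i := by rw [hwM, sub_smul, sub_eq_zero.1 h]
    have hbase := inner_base w
    rw [hwi, real_inner_smul_right] at hbase
    have hcoeff := (mul_eq_zero.1 hbase).resolve_right (height_pos i).ne'
    exact hne (Subtype.ext (by rw [hwi, hcoeff, zero_smul, ZeroMemClass.coe_zero]))
  obtain ⟨l, hl, hla, hnorm⟩ :=
    exists_norm_smul_add_half_smul_eq_one (G.norm_vec i) hMi hMa hN
  have hy : l • (w : E) + (1 / 2 + l * (s - a / 2)) • G.vec i =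
      l • (M - (a / 2) • G.vec i) + (1 / 2 : ℝ) • G.vec i := by
    rw [hwM]
    module
  have hpoint : G.IsHullPoint i (l • (w : E) + (1 / 2 + l * (s - a / 2)) • G.vec i) := by
    rw [hy]
    refine ⟨hnorm, ?_, fun q hq h => ?_⟩ <;>
      rw [inner_add_left, real_inner_smul_left, real_inner_smul_left, inner_sub_left,
        real_inner_smul_left]
    · rw [inner_vec_self, hMi]
      ring
    · have hle := real_inner_le_one_of_norm_eq_one (G.norm_vec i) hq
      have hlM : l * (a / 2) ≤ l * ⟪M, q⟫_ℝ := mul_le_mul_of_nonneg_left (hMq q h) hl.le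
      nlinarith
  have hbase := hpoint.half_le_inner_vec G.base
  rw [inner_add_left, real_inner_smul_left, real_inner_smul_left, real_inner_comm, inner_base,
    mul_zero, zero_add, real_inner_comm] at hbase
  exact ⟨l, _, hl, pos_of_mul_pos_left (one_half_pos.trans_le hbase) (height_pos i).le, hpoint⟩

lemma eq_smul_direction (z : G.Contact) {l μ : ℝ} (hl : 0 < l)
    (h : l • (w : E) + μ • G.vec z.1.1 = G.vec z.1.2) :
    ∃ c : ℝ, 0 < c ∧ w = c • G.direction z := by
  have hheight : G.height z.1.2 = μ * G.height z.1.1 := by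
    rw [height, ← h, inner_add_right, real_inner_smul_right, real_inner_smul_right, inner_base,
      mul_zero, zero_add, height]
  have hpos := height_pos (G := G) z.1.1
  refine ⟨(l * G.height z.1.1)⁻¹, by positivity, (inv_smul_eq_iff₀ (by positivity)).1 ?_⟩
  rw [inv_inv]
  refine Subtype.ext ?_
  simp only [direction, Submodule.coe_smul]
  rw [hheight, ← h]
  module

lemma inner_sub_direction_pos (h : z.1.1 ≠ j) :
    0 < ⟪G.vec j - G.vec z.1.1, (G.direction z : E)⟫_ℝ := by
  have hexpand : ⟪G.vec j - G.vec z.1.1, (G.direction z : E)⟫_ℝ =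
      G.height z.1.1 * (⟪G.vec j, G.vec z.1.2⟫_ℝ - 1 / 2) +
        G.height z.1.2 * (1 - ⟪G.vec z.1.1, G.vec j⟫_ℝ) := by
    simp only [direction, inner_sub_left, inner_sub_right, real_inner_smul_right, inner_vec_self,
      z.2, real_inner_comm (G.vec z.1.1) (G.vec j)]
    ring
  rw [hexpand]
  exact add_pos_of_nonneg_of_pos
    (mul_nonneg (height_pos _).le (sub_nonneg.2 (G.half_le_inner _ _)))
    (mul_pos (height_pos _) (sub_pos.2 (inner_vec_lt_one h)))

lemma eq_zero_of_mem_cone_true (hij : i ≠ j) (hi : w ∈ G.raySystem.cone (i, true))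
    (hj : w ∈ G.raySystem.cone (j, true)) : w = 0 := by
  let f : G.Tangent →ₗ[ℝ] ℝ := (innerₗ E (G.vec j - G.vec i)).comp G.Tangent.subtype
  refine eq_zero_of_mem_hull (f := f) ?_ hi ?_
  · rintro _ ⟨z, hz, rfl⟩
    obtain rfl := isOn_true.1 hz
    exact inner_sub_direction_pos hij
  · refine neg_nonneg.1 (RaySystem.nonneg_of_mem_cone (f := -f) (fun z hz => ?_) hj)
    obtain rfl := isOn_true.1 hz
    have := inner_sub_direction_pos (z := z) hij.symm
    rw [← neg_sub, inner_neg_left] at this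
    exact this.le

/-- In the spherical quadrangle `G.vec i`, `y`, `G.vec j`, `y'` the diagonals cross and have length
at most `π / 3`, while two opposite sides have length exactly `π / 3`; so it is degenerate. -/
lemma eq_vec_of_smul_add_smul_eq (hy : G.IsHullPoint i y) (hy' : G.IsHullPoint j y')
    {a a' b b' : ℝ} (ha : 0 < a) (ha' : 0 < a') (hb : 0 < b) (hb' : 0 < b')
    (h : a • G.vec i + a' • G.vec j = b • y + b' • y') :
    ⟪G.vec i, G.vec j⟫_ℝ = 1 / 2 ∧ y = G.vec j := by
  have h1 := congrArg (⟪·, G.vec i⟫_ℝ) h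
  have h2 := congrArg (⟪·, G.vec j⟫_ℝ) h
  have h3 := congrArg (⟪y, ·⟫_ℝ) h
  have h4 := congrArg (⟪y', ·⟫_ℝ) h
  simp only [inner_add_left, inner_add_right, real_inner_smul_left, real_inner_smul_right,
    inner_vec_self, hy.inner_vec, hy'.inner_vec, hy.inner_self, hy'.inner_self,
    real_inner_comm (G.vec i) (G.vec j), real_inner_comm y y'] at h1 h2 h3 h4
  have hij := G.half_le_inner i j
  have hyy' := hy.half_le_inner_hullPoint hy'
  have hyj := hy.inner_vec_le_one j
  have hyi := hy'.inner_vec_le_one i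
  have hsum : a * (⟪y', G.vec i⟫_ℝ - ⟪G.vec i, G.vec j⟫_ℝ - 1 / 2) +
      a' * (⟪y, G.vec j⟫_ℝ - ⟪G.vec i, G.vec j⟫_ℝ - 1 / 2) +
      b * (⟪y, G.vec j⟫_ℝ - ⟪y, y'⟫_ℝ - 1 / 2) +
      b' * (⟪y', G.vec i⟫_ℝ - ⟪y, y'⟫_ℝ - 1 / 2) = 0 := by linarith
  have hle : ∀ x u v : ℝ, 0 < x → u ≤ 1 → 1 / 2 ≤ v → x * (u - v - 1 / 2) ≤ 0 :=
    fun x u v hx hu hv => mul_nonpos_of_nonneg_of_nonpos hx.le (by linarith)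
  have hzero : 0 ≤ a' * (⟪y, G.vec j⟫_ℝ - ⟪G.vec i, G.vec j⟫_ℝ - 1 / 2) := by
    linarith [hsum, hle a _ _ ha hyi hij, hle b _ _ hb hyj hyy', hle b' _ _ hb' hyi hyy']
  have hnonneg := nonneg_of_mul_nonneg_right hzero ha'
  exact ⟨by linarith, hy.eq_vec (by linarith)⟩

lemma exists_contact_of_mem_cone_true_false (hi : w ∈ G.raySystem.cone (i, true))
    (hj : w ∈ G.raySystem.cone (j, false)) (hw : w ≠ 0) :
    ∃ z : G.Contact, z.1 = (i, j) ∧ ∃ c : ℝ, 0 < c ∧ w = c • G.direction z := by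
  obtain ⟨l, μ, hl, hμ, hy⟩ := exists_isHullPoint hi hw
  obtain ⟨l', μ', hl', hμ', hy'⟩ := exists_isHullPoint (neg_mem_cone_true.2 hj) (neg_ne_zero.2 hw)
  have hcross : (l' * μ) • G.vec i + (l * μ') • G.vec j =
      l' • (l • (w : E) + μ • G.vec i) + l • (l' • ((-w : G.Tangent) : E) + μ' • G.vec j) := by
    rw [Submodule.coe_neg]
    module
  obtain ⟨hij, hyj⟩ := eq_vec_of_smul_add_smul_eq hy hy' (mul_pos hl' hμ) (mul_pos hl hμ') hl' hl
    hcross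
  exact ⟨⟨(i, j), hij⟩, rfl, eq_smul_direction _ hl hyj⟩

lemma eq_zero_of_neg_mem_cone_true (hw : w ∈ G.raySystem.cone (i, true))
    (hw' : -w ∈ G.raySystem.cone (i, true)) : w = 0 := by
  by_contra hne
  obtain ⟨⟨z, hz⟩, rfl, -⟩ := exists_contact_of_mem_cone_true_false hw
    (neg_mem_cone_true.1 hw') hne
  rw [inner_vec_self] at hz
  norm_num at hz

lemma eq_vec_of_smul_vec_eq (hij : ⟪G.vec i, G.vec j⟫_ℝ = 1 / 2) (hy : G.IsHullPoint i y)
    (hy' : G.IsHullPoint i y') {a a' κ ν : ℝ} (ha : 0 < a) (ha' : 0 < a')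
    (h : κ • G.vec j = a • y + a' • y' + ν • G.vec i) : y = G.vec j := by
  obtain ⟨k, hki, hjk⟩ := exists_neighbor_ne (G := G) i j
  have h1 := congrArg (⟪·, G.vec i⟫_ℝ) h
  have h2 := congrArg (⟪·, G.vec j⟫_ℝ) h
  have h3 := congrArg (⟪·, G.vec k⟫_ℝ) h
  simp only [inner_add_left, real_inner_smul_left, inner_vec_self, hy.inner_vec, hy'.inner_vec,
    real_inner_comm (G.vec i) (G.vec j), hij, hjk] at h1 h2 h3
  have hyj' := mul_le_mul_of_nonneg_left (hy'.inner_vec_le_one j) ha'.le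
  have hyk := mul_le_mul_of_nonneg_left (hy.half_le_inner_vec k) ha.le
  have hyk' := mul_le_mul_of_nonneg_left (hy'.half_le_inner_vec k) ha'.le
  have hik := inner_vec_lt_one (G := G) hki.symm
  have hν : 0 ≤ ν := by
    by_contra! hneg
    have := mul_lt_mul_of_neg_left hik hneg
    linarith
  exact hy.eq_vec (le_of_mul_le_mul_left (by linarith [hyj']) ha)

lemma extreme_true (z : G.Contact) (hw : w ∈ G.raySystem.cone (z.1.1, true))
    (hw' : w' ∈ G.raySystem.cone (z.1.1, true)) {c : ℝ} (h : w + w' = c • G.direction z) :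
    ∃ d : ℝ, 0 ≤ d ∧ w = d • G.direction z := by
  obtain rfl | hne := eq_or_ne w 0
  · exact ⟨0, le_rfl, (zero_smul ℝ _).symm⟩
  obtain rfl | hne' := eq_or_ne w' 0
  · rw [add_zero] at h
    refine ⟨c, le_of_not_gt fun hc => hne (eq_zero_of_neg_mem_cone_true hw ?_), h⟩
    rw [h, ← neg_smul]
    exact PointedCone.smul_mem _ (neg_nonneg.2 hc.le) (RaySystem.dir_mem_cone (isOn_true.2 rfl))
  obtain ⟨l, μ, hl, -, hy⟩ := exists_isHullPoint hw hne
  obtain ⟨l', μ', hl', -, hy'⟩ := exists_isHullPoint hw' hne'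
  have hsum : (c * G.height z.1.1) • G.vec z.1.2 =
      l⁻¹ • (l • (w : E) + μ • G.vec z.1.1) + l'⁻¹ • (l' • (w' : E) + μ' • G.vec z.1.1) +
        (c * G.height z.1.2 - l⁻¹ * μ - l'⁻¹ * μ') • G.vec z.1.1 := by
    have h' := congrArg (Subtype.val : G.Tangent → E) h
    simp only [direction, Submodule.coe_add, Submodule.coe_smul] at h'
    rw [smul_add l⁻¹, smul_add l'⁻¹, inv_smul_smul₀ hl.ne', inv_smul_smul₀ hl'.ne']
    rw [eq_sub_of_add_eq' h']
    module
  obtain ⟨d, hd, hwd⟩ := eq_smul_direction z hl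
    (eq_vec_of_smul_vec_eq z.2 hy hy' (inv_pos.2 hl) (inv_pos.2 hl') hsum)
  exact ⟨d, hd.le, hwd⟩

variable (G) in
/-- The contact system of the directions in which the vectors see each other. -/
noncomputable def contactSystem : ContactSystem G.Contact (V × Bool) G.Tangent where
  __ := G.raySystem
  dir_ne_zero := direction_ne_zero
  nontrivial := by
    rintro ⟨i, b⟩
    obtain ⟨f, hf, h⟩ := G.exists_neighbors i
    cases b
    · refine ⟨⟨(f 0, i), by rw [real_inner_comm]; exact h 0⟩, isOn_false.2 rfl,
        ⟨(f 1, i), by rw [real_inner_comm]; exact h 1⟩, isOn_false.2 rfl, fun h01 => ?_⟩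
      exact zero_ne_one (hf (congrArg (·.1.1) h01))
    · refine ⟨⟨(i, f 0), h 0⟩, isOn_true.2 rfl, ⟨(i, f 1), h 1⟩, isOn_true.2 rfl, fun h01 => ?_⟩
      exact zero_ne_one (hf (congrArg (·.1.2) h01))
  salient := by
    rintro ⟨i, _ | _⟩ w hw hw'
    · exact neg_eq_zero.1 (eq_zero_of_neg_mem_cone_true (neg_mem_cone_true.2 hw)
        (neg_mem_cone_true.2 hw'))
    · exact eq_zero_of_neg_mem_cone_true hw hw'
  exists_contact_of_mem_inf := by
    rintro ⟨i, _ | _⟩ ⟨j, _ | _⟩ hne w hi hj hw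
    · exact absurd (neg_eq_zero.1 (eq_zero_of_mem_cone_true (fun h => hne (by rw [h]))
        (neg_mem_cone_true.2 hi) (neg_mem_cone_true.2 hj))) hw
    · obtain ⟨z, hz, h⟩ := exists_contact_of_mem_cone_true_false hj hi hw
      exact ⟨z, isOn_false.2 (by rw [hz]), isOn_true.2 (by rw [hz]), h⟩
    · obtain ⟨z, hz, h⟩ := exists_contact_of_mem_cone_true_false hi hj hw
      exact ⟨z, isOn_true.2 (by rw [hz]), isOn_false.2 (by rw [hz]), h⟩
    · exact absurd (eq_zero_of_mem_cone_true (fun h => hne (by rw [h])) hi hj) hw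
  extreme := by
    rintro ⟨i, _ | _⟩ z hz w hw w' hw' c h
    · obtain rfl := isOn_false.1 hz
      obtain ⟨d, hd, h'⟩ := extreme_true (G.swap z) (neg_mem_cone_true.2 hw)
        (neg_mem_cone_true.2 hw') (c := c) (by rw [direction_swap, smul_neg, ← neg_add, h]; rfl)
      exact ⟨d, hd, neg_injective (by rw [h', direction_swap, smul_neg]; rfl)⟩
    · obtain rfl := isOn_true.1 hz
      exact extreme_true z hw hw' h

theorem card_contact_add_four_le [Fintype V] (hE : Module.finrank ℝ E = 4) :
    Fintype.card G.Contact + 4 ≤ 4 * Fintype.card V := by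
  obtain ⟨f, hf, h⟩ := G.exists_neighbors G.base
  have := Module.finite_of_finrank_eq_succ hE
  have hbase : G.vec G.base ≠ 0 := norm_ne_zero_iff.1 (by rw [G.norm_vec]; exact one_ne_zero)
  have : Fact (Module.finrank ℝ E = 3 + 1) := ⟨hE⟩
  have hcount := G.contactSystem.card_contacts_add_four_le
    (A := (G.base, true)) (B := (G.base, false)) (Submodule.finrank_orthogonal_span_singleton hbase)
    (z := fun k => ⟨(G.base, f k), h k⟩) (fun k l hkl => hf (congrArg (·.1.2) hkl))
    (fun k => isOn_true.2 rfl) (fun w => neg_mem_cone_false.2) (by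
      rintro ⟨z, hz⟩ ⟨h1, h2⟩
      rw [isOn_true.1 h1, isOn_false.1 h2, inner_vec_self] at hz
      norm_num at hz)
  rw [Fintype.card_prod, Fintype.card_bool] at hcount
  omega

end SphericalConfig

/-! ### Unit pairs and unit triangles -/

section UnitNeighbors

variable {E : Type*} [NormedAddCommGroup E] {P : Finset E} {v x y : E}

/-- The points of `P` at distance exactly `1` from `v`. -/
noncomputable def unitNeighbors (P : Finset E) (v : E) : Finset E :=
  P.filter fun x => ‖v - x‖ = 1

/-- The ordered pairs of points of `P` at distance exactly `1`. -/
noncomputable def orderedUnitPairs (P : Finset E) : Finset (E × E) :=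
  (P ×ˢ P).filter fun z => ‖z.1 - z.2‖ = 1

lemma mem_unitNeighbors : x ∈ unitNeighbors P v ↔ x ∈ P ∧ ‖v - x‖ = 1 := Finset.mem_filter

lemma mem_orderedUnitPairs : (x, y) ∈ orderedUnitPairs P ↔ (x ∈ P ∧ y ∈ P) ∧ ‖x - y‖ = 1 := by
  rw [orderedUnitPairs, Finset.mem_filter, Finset.mem_product]

lemma ne_of_norm_sub_eq_one (h : ‖x - y‖ = 1) : x ≠ y := by
  rintro rfl
  simp at h

lemma sum_card_unitNeighbors (P : Finset E) :
    ∑ v ∈ P, (unitNeighbors P v).card = (orderedUnitPairs P).card := by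
  simp only [unitNeighbors, orderedUnitPairs, Finset.card_filter, Finset.sum_product]

lemma card_orderedUnitPairs_le_erase (P : Finset E) (x : E) :
    (orderedUnitPairs P).card ≤
      (orderedUnitPairs (P.erase x)).card + 2 * (unitNeighbors P x).card := by
  have hsub : orderedUnitPairs P ⊆ orderedUnitPairs (P.erase x) ∪
      ({x} ×ˢ unitNeighbors P x ∪ unitNeighbors P x ×ˢ {x}) := by
    rintro ⟨a, b⟩ h
    obtain ⟨⟨ha, hb⟩, hab⟩ := mem_orderedUnitPairs.1 h
    simp only [Finset.mem_union, Finset.mem_product, Finset.mem_singleton, mem_orderedUnitPairs,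
      mem_unitNeighbors, Finset.mem_erase]
    obtain rfl | hax := eq_or_ne a x
    · exact Or.inr (Or.inl ⟨rfl, hb, hab⟩)
    obtain rfl | hbx := eq_or_ne b x
    · exact Or.inr (Or.inr ⟨⟨ha, by rwa [norm_sub_rev]⟩, rfl⟩)
    · exact Or.inl ⟨⟨⟨hax, ha⟩, hbx, hb⟩, hab⟩
  refine (Finset.card_le_card hsub).trans ((Finset.card_union_le _ _).trans ?_)
  refine Nat.add_le_add_left ((Finset.card_union_le _ _).trans_eq ?_) _
  rw [Finset.card_product, Finset.card_product, Finset.card_singleton]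
  ring

end UnitNeighbors

section SphereOfRadiusOne

variable {E : Type*} [NormedAddCommGroup E] [InnerProductSpace ℝ E] {P : Finset E} {v x y : E}

lemma real_inner_sub_sub_eq_of_norm_eq_one (hx : ‖v - x‖ = 1) (hy : ‖v - y‖ = 1) :
    ⟪x - v, y - v⟫_ℝ = 1 - ‖x - y‖ ^ 2 / 2 := by
  rw [← sub_sub_sub_cancel_right x y v, norm_sub_sq_real, norm_sub_rev x, norm_sub_rev y, hx, hy]
  ring

/-- The points of `P` seen from a point `v` at distance `1` from all of them. -/
def SphericalConfig.ofFinset (hv : ∀ x ∈ P, ‖v - x‖ = 1)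
    (hdiam : ∀ x ∈ P, ∀ y ∈ P, ‖x - y‖ ≤ 1) (hdeg : ∀ x ∈ P, 3 ≤ (unitNeighbors P x).card)
    (base : P) : SphericalConfig E P where
  vec x := x - v
  norm_vec x := by rw [norm_sub_rev, hv x x.2]
  half_le_inner x y := by
    rw [real_inner_sub_sub_eq_of_norm_eq_one (hv x x.2) (hv y y.2)]
    linarith [pow_le_one₀ (n := 2) (norm_nonneg _) (hdiam x x.2 y y.2)]
  vec_injective := (sub_left_injective (b := v)).comp Subtype.val_injective
  exists_neighbors x := by
    obtain ⟨f⟩ : Nonempty (Fin 3 ↪ unitNeighbors P (x : E)) :=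
      Function.Embedding.nonempty_of_card_le (by simpa using hdeg x x.2)
    have hf : ∀ k, (f k : E) ∈ P ∧ ‖(x : E) - f k‖ = 1 := fun k => mem_unitNeighbors.1 (f k).2
    refine ⟨fun k => ⟨f k, (hf k).1⟩, fun k l hkl => ?_, fun k => ?_⟩
    · exact f.injective (Subtype.ext (Subtype.mk.inj hkl))
    · rw [real_inner_sub_sub_eq_of_norm_eq_one (hv x x.2) (hv _ (hf k).1), (hf k).2]
      norm_num
  base := base

lemma card_orderedUnitPairs_add_four_le_of_three_le (hE : Module.finrank ℝ E = 4)
    (hP : P.Nonempty) (hv : ∀ x ∈ P, ‖v - x‖ = 1) (hdiam : ∀ x ∈ P, ∀ y ∈ P, ‖x - y‖ ≤ 1)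
    (hdeg : ∀ x ∈ P, 3 ≤ (unitNeighbors P x).card) :
    (orderedUnitPairs P).card + 4 ≤ 4 * P.card := by
  obtain ⟨x, hx⟩ := hP
  have hcount := SphericalConfig.card_contact_add_four_le
    (G := SphericalConfig.ofFinset hv hdiam hdeg ⟨x, hx⟩) hE
  rw [Fintype.card_coe] at hcount
  refine (Nat.add_le_add_right ?_ 4).trans hcount
  rw [← Fintype.card_coe]
  have hmem : ∀ z : orderedUnitPairs P, (z.1.1 ∈ P ∧ z.1.2 ∈ P) ∧ ‖z.1.1 - z.1.2‖ = 1 :=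
    fun z => mem_orderedUnitPairs.1 z.2
  refine Fintype.card_le_of_injective
    (fun z => ⟨(⟨z.1.1, (hmem z).1.1⟩, ⟨z.1.2, (hmem z).1.2⟩), ?_⟩) fun z z' h => ?_
  · refine (real_inner_sub_sub_eq_of_norm_eq_one (hv _ (hmem z).1.1) (hv _ (hmem z).1.2)).trans ?_
    rw [(hmem z).2]
    norm_num
  · have hzz' := congrArg Subtype.val h
    exact Subtype.ext (Prod.ext (congrArg (·.1.1) hzz') (congrArg (·.2.1) hzz'))

theorem card_orderedUnitPairs_add_four_le (hE : Module.finrank ℝ E = 4) (hP : P.Nonempty)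
    (hv : ∀ x ∈ P, ‖v - x‖ = 1) (hdiam : ∀ x ∈ P, ∀ y ∈ P, ‖x - y‖ ≤ 1) :
    (orderedUnitPairs P).card + 4 ≤ 4 * P.card := by
  induction P using Finset.strongInduction with
  | H P ih =>
  by_cases! hdeg : ∀ x ∈ P, 3 ≤ (unitNeighbors P x).card
  · exact card_orderedUnitPairs_add_four_le_of_three_le hE hP hv hdiam hdeg
  obtain ⟨x, hx, hlt⟩ := hdeg
  have hcard := Finset.card_erase_add_one hx
  have hdel := card_orderedUnitPairs_le_erase P x
  obtain hempty | hne := (P.erase x).eq_empty_or_nonempty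
  · obtain rfl := ((Finset.erase_eq_empty_iff P x).1 hempty).resolve_left hP.ne_empty
    simp [orderedUnitPairs, Finset.filter_singleton]
  · have hsub := Finset.erase_subset x P
    have := ih _ (Finset.erase_ssubset hx) hne (fun y hy => hv y (hsub hy))
      (fun y hy z hz => hdiam y (hsub hy) z (hsub hz))
    lia

end SphereOfRadiusOne

section Counting

variable (X : Finset (EuclideanSpace ℝ (Fin 4)))

lemma card_orderedUnitPairs_le_two_mul_card_unitPairs :
    (orderedUnitPairs X).card ≤ 2 * (unitPairs X).card := by
  refine Finset.card_le_mul_card_image_of_maps_to (f := fun z => {z.1, z.2}) ?_ 2 ?_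
  · rintro ⟨x, y⟩ h
    obtain ⟨⟨hx, hy⟩, hxy⟩ := mem_orderedUnitPairs.1 h
    have hne := ne_of_norm_sub_eq_one hxy
    simp [unitPairs, Finset.insert_subset_iff, hx, hy, hxy, norm_sub_rev y x, hne]
  · intro s hs
    obtain ⟨a, b, -, rfl⟩ :=
      Finset.card_eq_two.1 (Finset.mem_powersetCard.1 (Finset.mem_filter.1 hs).1).2
    refine (Finset.card_le_card (t := {(a, b), (b, a)}) ?_).trans Finset.card_le_two
    rintro ⟨x, y⟩ h
    have hxy : ({x, y} : Finset _) = {a, b} := (Finset.mem_filter.1 h).2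
    rw [← Finset.coe_inj, Finset.coe_pair, Finset.coe_pair, Set.pair_eq_pair_iff] at hxy
    simpa using hxy

lemma two_mul_card_unitTriangles_mem_le {v : EuclideanSpace ℝ (Fin 4)} (hv : v ∈ X) :
    2 * ((unitTriangles X).filter (v ∈ ·)).card ≤
      (orderedUnitPairs (unitNeighbors X v)).card := by
  refine Finset.mul_card_image_le_card_of_maps_to (f := fun z => {v, z.1, z.2}) ?_ 2 ?_
  · rintro ⟨x, y⟩ h
    obtain ⟨⟨hx, hy⟩, hxy⟩ := mem_orderedUnitPairs.1 h
    obtain ⟨hx, hvx⟩ := mem_unitNeighbors.1 hx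
    obtain ⟨hy, hvy⟩ := mem_unitNeighbors.1 hy
    have hcard : ({v, x, y} : Finset _).card = 3 := Finset.card_eq_three.2 ⟨v, x, y,
      ne_of_norm_sub_eq_one hvx, ne_of_norm_sub_eq_one hvy, ne_of_norm_sub_eq_one hxy, rfl⟩
    simp [unitTriangles, Finset.insert_subset_iff, hv, hx, hy, hcard, hxy, hvx, hvy,
      norm_sub_rev x v, norm_sub_rev y v, norm_sub_rev y x]
  · intro s hs
    obtain ⟨hs, hvs⟩ := Finset.mem_filter.1 hs
    obtain ⟨hs, hunit⟩ := Finset.mem_filter.1 hs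
    obtain ⟨hsX, hs3⟩ := Finset.mem_powersetCard.1 hs
    obtain ⟨x, y, hxy, hsxy⟩ := Finset.card_eq_two.1
      ((Finset.card_erase_of_mem hvs).trans (congrArg (· - 1) hs3))
    have hvxy : v ∉ ({x, y} : Finset _) := hsxy ▸ Finset.notMem_erase v s
    obtain rfl : s = {v, x, y} := by rw [← hsxy, Finset.insert_erase hvs]
    rw [← Finset.card_pair (show (x, y) ≠ (y, x) from fun h => hxy (congrArg Prod.fst h))]
    simp only [Finset.mem_insert, Finset.mem_singleton, not_or] at hvxy
    have hx : x ∈ X ∧ ‖v - x‖ = 1 := ⟨hsX (by simp), hunit v (by simp) x (by simp) hvxy.1⟩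
    have hy : y ∈ X ∧ ‖v - y‖ = 1 := ⟨hsX (by simp), hunit v (by simp) y (by simp) hvxy.2⟩
    have hxy1 : ‖x - y‖ = 1 := hunit x (by simp) y (by simp) hxy
    refine Finset.card_le_card ?_
    simp [Finset.insert_subset_iff, mem_orderedUnitPairs, mem_unitNeighbors, hx, hy, hxy1,
      norm_sub_rev y x, Finset.pair_comm y x]

lemma six_mul_card_unitTriangles_le :
    6 * (unitTriangles X).card ≤
      ∑ v ∈ X, (orderedUnitPairs (unitNeighbors X v)).card := by
  have hcard : ∀ s ∈ unitTriangles X, (X.filter (· ∈ s)).card = 3 := by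
    intro s hs
    obtain ⟨hsX, hs3⟩ := Finset.mem_powersetCard.1 (Finset.mem_filter.1 hs).1
    rw [Finset.filter_mem_eq_inter, Finset.inter_eq_right.2 hsX, hs3]
  calc 6 * (unitTriangles X).card
      = 2 * ∑ s ∈ unitTriangles X, (X.filter (· ∈ s)).card := by
        rw [Finset.sum_congr rfl hcard, Finset.sum_const, smul_eq_mul]
        ring
    _ = ∑ v ∈ X, 2 * ((unitTriangles X).filter (v ∈ ·)).card := by
        rw [← Finset.mul_sum]
        exact congrArg (2 * ·)
          (Finset.sum_card_bipartiteAbove_eq_sum_card_bipartiteBelow (· ∈ ·)).symm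
    _ ≤ ∑ v ∈ X, (orderedUnitPairs (unitNeighbors X v)).card :=
        Finset.sum_le_sum fun v hv => two_mul_card_unitTriangles_mem_le X hv

end Counting

theorem triangles_bounded_by_edges (X : Finset (EuclideanSpace ℝ (Fin 4)))
    (n e t : ℕ) (hn : X.card = n)
    (hdiam : ∀ x ∈ X, ∀ y ∈ X, ‖x - y‖ ≤ 1)
    (hmindeg : ∀ x ∈ X, ∃ y ∈ X, ‖x - y‖ = 1)
    (he : (unitPairs X).card = e) (ht : (unitTriangles X).card = t) :
    (3 * t : ℤ) ≤ 4 * e - 2 * n := by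
  have hlocal : ∀ v ∈ X, (orderedUnitPairs (unitNeighbors X v)).card + 4 ≤
      4 * (unitNeighbors X v).card := by
    intro v hv
    obtain ⟨y, hy, hvy⟩ := hmindeg v hv
    exact card_orderedUnitPairs_add_four_le finrank_euclideanSpace_fin
      ⟨y, mem_unitNeighbors.2 ⟨hy, hvy⟩⟩ (fun x hx => (mem_unitNeighbors.1 hx).2)
      fun x hx z hz => hdiam x (mem_unitNeighbors.1 hx).1 z (mem_unitNeighbors.1 hz).1
  have hsum := Finset.sum_le_sum hlocal
  rw [Finset.sum_add_distrib, Finset.sum_const, ← Finset.mul_sum, sum_card_unitNeighbors,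
    smul_eq_mul] at hsum
  have hedges := card_orderedUnitPairs_le_two_mul_card_unitPairs X
  have htriangles := six_mul_card_unitTriangles_le X
  omega
end

section
/- Let X be a finite set in Euclidean 4-space with all pairwise distances at most 1. Then there do not exist three 4-element subsets K₁, K₂, K₃ of X, each having all six pairwise distances within it equal to 1, such that |K₁ ∩ K₂| = 2, |K₁ ∩ K₃| = 2, and K₂ ∩ K₃ = ∅. -/
attribute [local instance] Classical.propDecidable

/-!
Let `a, b` and `c, d` be the points that `K₁` shares with `K₂` and with `K₃`, and let `p, q` and
`r, s` be the remaining points of `K₂` and of `K₃`. The points `p, q` are equidistant from `a, b`,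
and `r, s` from `c, d`, so besides the height `w` over the hyperplane of the tetrahedron `abcd` each
of them has two coordinates: one parallel to the opposite edge and one, `α`, along the axis joining
the midpoints of `ab` and `cd`. The distance of one of `p, q` from one of `r, s` depends only on
`(α, w)`: one minus its square is a positive multiple of the Lorentz form `w w' - α α'`. Thus the
form is nonnegative across the two pairs. Inside a pair it is nonpositive, a pair contains a vector
with `w² > α²`, and neither vector of a pair lies in the cone `-α ≥ |w|`. Four such vectors do not
exist in the Lorentz plane.
-/

open Module (finrank)

/-- The symmetric bilinear form of signature `(1, 1)` on the plane, in light-cone coordinates: with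
`v = (x - t, x + t)` and `v' = (x' - t', x' + t')` it equals `2 * (x * x' - t * t')`. -/
def lorentzForm (v v' : ℝ × ℝ) : ℝ := v.1 * v'.2 + v.2 * v'.1

lemma lorentzForm_comm (v v' : ℝ × ℝ) : lorentzForm v v' = lorentzForm v' v := by
  unfold lorentzForm
  ring

lemma fst_neg_and_snd_pos_of_lorentzForm {u v x : ℝ × ℝ} (hu₁ : 0 < u.1) (hu₂ : 0 < u.2)
    (hv₁ : 0 < v.1) (hv₂ : 0 < v.2) (hux : lorentzForm u x ≤ 0) (hvx : 0 ≤ lorentzForm v x)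
    (hx : x.1 < 0 ∨ 0 < x.2) : x.1 < 0 ∧ 0 < x.2 := by
  unfold lorentzForm at hux hvx
  have hx₁ : x.1 < 0 := by
    by_contra! h
    have hx₂ : 0 < x.2 := hx.resolve_left h.not_gt
    linarith [mul_pos hu₁ hx₂, mul_nonneg hu₂.le h]
  have hvx₂ : 0 < v.1 * x.2 := by linarith [mul_neg_of_pos_of_neg hv₂ hx₁]
  exact ⟨hx₁, pos_of_mul_pos_right hvx₂ hv₁.le⟩

lemma false_of_lorentzForm_of_pos {u u' v v' : ℝ × ℝ} (hu₁ : 0 < u.1) (hu₂ : 0 < u.2)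
    (hv₁ : 0 < v.1) (hv₂ : 0 < v.2) (hu' : u'.1 < 0 ∨ 0 < u'.2) (hv' : v'.1 < 0 ∨ 0 < v'.2)
    (huu' : lorentzForm u u' ≤ 0) (hvv' : lorentzForm v v' ≤ 0) (huv' : 0 ≤ lorentzForm u v')
    (hvu' : 0 ≤ lorentzForm v u') (hu'v' : 0 ≤ lorentzForm u' v') : False := by
  obtain ⟨hu'₁, hu'₂⟩ :=
    fst_neg_and_snd_pos_of_lorentzForm hu₁ hu₂ hv₁ hv₂ huu' hvu' hu'
  obtain ⟨hv'₁, hv'₂⟩ :=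
    fst_neg_and_snd_pos_of_lorentzForm hv₁ hv₂ hu₁ hu₂ hvv' huv' hv'
  unfold lorentzForm at hu'v'
  linarith [mul_neg_of_neg_of_pos hu'₁ hv'₂, mul_neg_of_pos_of_neg hu'₂ hv'₁]

theorem false_of_lorentzForm {u u' v v' : ℝ × ℝ} (hu : 0 < u.1 * u.2) (hv : 0 < v.1 * v.2)
    (hu' : u'.1 < 0 ∨ 0 < u'.2) (hv' : v'.1 < 0 ∨ 0 < v'.2)
    (huu' : lorentzForm u u' ≤ 0) (hvv' : lorentzForm v v' ≤ 0) (huv : 0 ≤ lorentzForm u v)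
    (huv' : 0 ≤ lorentzForm u v') (hu'v : 0 ≤ lorentzForm u' v)
    (hu'v' : 0 ≤ lorentzForm u' v') : False := by
  have hvu' : 0 ≤ lorentzForm v u' := lorentzForm_comm u' v ▸ hu'v
  obtain ⟨hu₁, hu₂⟩ | ⟨hu₁, hu₂⟩ := mul_pos_iff.1 hu <;>
    obtain ⟨hv₁, hv₂⟩ | ⟨hv₁, hv₂⟩ := mul_pos_iff.1 hv
  · exact false_of_lorentzForm_of_pos hu₁ hu₂ hv₁ hv₂ hu' hv' huu' hvv' huv' hvu' hu'v'
  · unfold lorentzForm at huv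
    linarith [mul_neg_of_pos_of_neg hu₁ hv₂, mul_neg_of_pos_of_neg hu₂ hv₁]
  · unfold lorentzForm at huv
    linarith [mul_neg_of_neg_of_pos hu₁ hv₂, mul_neg_of_neg_of_pos hu₂ hv₁]
  · -- Reflecting the space axis preserves the form and the excluded cone.
    let reflect (x : ℝ × ℝ) : ℝ × ℝ := (-x.2, -x.1)
    have lorentzForm_reflect (x y : ℝ × ℝ) :
        lorentzForm (reflect x) (reflect y) = lorentzForm x y := by
      simp only [lorentzForm, reflect]; ring
    have reflect_or {x : ℝ × ℝ} (hx : x.1 < 0 ∨ 0 < x.2) :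
        (reflect x).1 < 0 ∨ 0 < (reflect x).2 := by
      simpa only [reflect, neg_lt_zero, neg_pos] using hx.symm
    refine false_of_lorentzForm_of_pos (u := reflect u) (u' := reflect u') (v := reflect v)
      (v' := reflect v') (neg_pos.2 hu₂) (neg_pos.2 hu₁) (neg_pos.2 hv₂) (neg_pos.2 hv₁)
      (reflect_or hu') (reflect_or hv') ?_ ?_ ?_ ?_ ?_ <;> rwa [lorentzForm_reflect]

variable {E : Type*} [NormedAddCommGroup E] {a b c d p q r s x y : E} {w : E → ℝ}

/-- The points `a, b, c, d` are the vertices of a regular tetrahedron of edge length one; the edges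
`ab` and `cd` are thought of as a distinguished pair of opposite edges. -/
structure IsUnitTetrahedron (a b c d : E) : Prop where
  norm_ab : ‖a - b‖ = 1
  norm_cd : ‖c - d‖ = 1
  norm_ac : ‖a - c‖ = 1
  norm_ad : ‖a - d‖ = 1
  norm_bc : ‖b - c‖ = 1
  norm_bd : ‖b - d‖ = 1

lemma IsUnitTetrahedron.swap (h : IsUnitTetrahedron a b c d) : IsUnitTetrahedron c d a b where
  norm_ab := h.norm_cd
  norm_cd := h.norm_ab
  norm_ac := norm_sub_rev a c ▸ h.norm_ac
  norm_ad := norm_sub_rev b c ▸ h.norm_bc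
  norm_bc := norm_sub_rev a d ▸ h.norm_ad
  norm_bd := norm_sub_rev b d ▸ h.norm_bd

lemma isUnitTetrahedron_of_pairwise {K : Set E} (hK : K.Pairwise fun x y ↦ ‖x - y‖ = 1)
    (hab : {a, b} ⊆ K) (hcd : {c, d} ⊆ K) (ab_ne : a ≠ b) (cd_ne : c ≠ d)
    (hdisj : Disjoint ({a, b} : Set E) {c, d}) : IsUnitTetrahedron a b c d := by
  obtain ⟨ha, hb⟩ := Set.pair_subset_iff.1 hab
  obtain ⟨hc, hd⟩ := Set.pair_subset_iff.1 hcd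
  have hne {x y : E} (hx : x ∈ ({a, b} : Set E)) (hy : y ∈ ({c, d} : Set E)) : x ≠ y :=
    hdisj.ne_of_mem hx hy
  exact
    { norm_ab := hK ha hb ab_ne
      norm_cd := hK hc hd cd_ne
      norm_ac := hK ha hc (hne (by simp) (by simp))
      norm_ad := hK ha hd (hne (by simp) (by simp))
      norm_bc := hK hb hc (hne (by simp) (by simp))
      norm_bd := hK hb hd (hne (by simp) (by simp)) }

/-- Light-cone coordinates of the projection of `x` to the plane spanned by the height direction and
the axis through the midpoints of two opposite edges of a unit tetrahedron, of which `cd` is one.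
When `x` has distance one from both ends of the other edge, `1 - ‖x - c‖ ^ 2 - ‖x - d‖ ^ 2` is `√8`
times its signed distance beyond the midpoint of `cd` along the axis. -/
def lightCone (c d : E) (w : E → ℝ) (x : E) : ℝ × ℝ :=
  (w x - (1 - ‖x - c‖ ^ 2 - ‖x - d‖ ^ 2), w x + (1 - ‖x - c‖ ^ 2 - ‖x - d‖ ^ 2))

variable [InnerProductSpace ℝ E]

lemma inner_sub_sub_eq_norm_sub_sq (x y z t : E) :
    inner ℝ (x - y) (z - t) =
      (‖x - t‖ ^ 2 + ‖y - z‖ ^ 2 - ‖x - z‖ ^ 2 - ‖y - t‖ ^ 2) / 2 := by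
  simp only [norm_sub_sq_real, inner_sub_left, inner_sub_right]
  ring

lemma exists_norm_sq_eq_sum_inner_sq_add_inner_sq [FiniteDimensional ℝ E] {ι : Type*} [Fintype ι]
    {v : ι → E} (hv : Orthonormal ℝ v) (hE : finrank ℝ E ≤ Fintype.card ι + 1) :
    ∃ e : E, ∀ x, ‖x‖ ^ 2 = ∑ i, inner ℝ (v i) x ^ 2 + inner ℝ e x ^ 2 := by
  obtain ⟨u, b, hvu, hb⟩ := hv.toSubtypeRange.exists_orthonormalBasis_extension
  let s : Finset E := Finset.univ.image v
  have hsu : s ⊆ u := fun x hx ↦ hvu <| by simpa [s] using hx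
  have hs : s.card = Fintype.card ι :=
    Finset.card_image_of_injective _ hv.linearIndependent.injective
  have hu : u.card = finrank ℝ E := (Module.finrank_eq_card_finset_basis b.toBasis).symm
  have norm_sq (x : E) : ‖x‖ ^ 2 =
      ∑ i, inner ℝ (v i) x ^ 2 + ∑ e ∈ u \ s, inner ℝ e x ^ 2 := by
    calc ‖x‖ ^ 2 = ∑ e ∈ u, inner ℝ e x ^ 2 := by
          simp only [← b.sum_sq_norm_inner_right x, hb, Real.norm_eq_abs, sq_abs]
          exact Finset.sum_coe_sort u fun e ↦ inner ℝ e x ^ 2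
      _ = ∑ e ∈ s, inner ℝ e x ^ 2 + ∑ e ∈ u \ s, inner ℝ e x ^ 2 := by
          rw [add_comm, Finset.sum_sdiff hsu]
      _ = _ := by rw [Finset.sum_image hv.linearIndependent.injective.injOn]
  have hcard : (u \ s).card ≤ 1 := by rw [Finset.card_sdiff_of_subset hsu]; omega
  obtain h | h := Nat.le_one_iff_eq_zero_or_eq_one.1 hcard
  · exact ⟨0, fun x ↦ by simp [norm_sq x, Finset.card_eq_zero.1 h]⟩
  · obtain ⟨e, h⟩ := Finset.card_eq_one.1 h
    exact ⟨e, fun x ↦ by simp [norm_sq x, h]⟩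

/-- `w` is a height function over the hyperplane spanned by the unit tetrahedron `a, b, c, d`: it is
the missing coordinate next to the orthogonal directions `a - b`, `c - d` and `a + b - c - d`, which
have norms `1`, `1` and `√2`. It is scaled by `√8` to keep later formulas integral. -/
structure IsTetrahedronHeight (a b c d : E) (w : E → ℝ) : Prop where
  norm_sub_sq : ∀ x y, ‖x - y‖ ^ 2 = inner ℝ (a - b) (x - y) ^ 2 + inner ℝ (c - d) (x - y) ^ 2 +
    inner ℝ (a + b - c - d) (x - y) ^ 2 / 2 + (w x - w y) ^ 2 / 8
  eq_zero_left : w a = 0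

namespace IsUnitTetrahedron

lemma orthonormal (h : IsUnitTetrahedron a b c d) :
    Orthonormal ℝ ![a - b, c - d, (√2)⁻¹ • (a + b - c - d)] := by
  have axis : a + b - c - d = (a - c) + (b - d) := by abel
  have norm_axis : ‖a + b - c - d‖ ^ 2 = 2 := by
    rw [axis, norm_add_sq_real, inner_sub_sub_eq_norm_sub_sq, norm_sub_rev c b, h.norm_ac,
      h.norm_ad, h.norm_bc, h.norm_bd, h.norm_ab, h.norm_cd]
    norm_num
  have inner_ab_cd : inner ℝ (a - b) (c - d) = 0 := by
    rw [inner_sub_sub_eq_norm_sub_sq, h.norm_ac, h.norm_ad, h.norm_bc, h.norm_bd]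
    norm_num
  have inner_ab_axis : inner ℝ (a - b) (a + b - c - d) = 0 := by
    rw [axis, inner_add_right, inner_sub_sub_eq_norm_sub_sq, inner_sub_sub_eq_norm_sub_sq,
      norm_sub_rev b a, h.norm_ac, h.norm_ad, h.norm_bc, h.norm_bd, h.norm_ab]
    norm_num
  have inner_cd_axis : inner ℝ (c - d) (a + b - c - d) = 0 := by
    rw [axis, inner_add_right, inner_sub_sub_eq_norm_sub_sq, inner_sub_sub_eq_norm_sub_sq,
      norm_sub_rev c a, norm_sub_rev c b, norm_sub_rev d a, norm_sub_rev d b, norm_sub_rev d c,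
      h.norm_ac, h.norm_ad, h.norm_bc, h.norm_bd, h.norm_cd]
    norm_num
  have norm_axis_normalized : ‖(√2)⁻¹ • (a + b - c - d)‖ = 1 := by
    rw [← sq_eq_sq₀ (norm_nonneg _) zero_le_one, norm_smul, mul_pow, norm_axis]
    norm_num
  simp [orthonormal_vecCons_iff, h.norm_ab, h.norm_cd, norm_axis_normalized, inner_ab_cd,
    inner_ab_axis, inner_cd_axis, real_inner_smul_right]

theorem exists_height [FiniteDimensional ℝ E] (h : IsUnitTetrahedron a b c d)
    (hE : finrank ℝ E ≤ 4) : ∃ w : E → ℝ, IsTetrahedronHeight a b c d w := by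
  obtain ⟨e, he⟩ := exists_norm_sq_eq_sum_inner_sq_add_inner_sq h.orthonormal (by simpa using hE)
  have norm_sq (x : E) : ‖x‖ ^ 2 = inner ℝ (a - b) x ^ 2 + inner ℝ (c - d) x ^ 2 +
      inner ℝ (a + b - c - d) x ^ 2 / 2 + inner ℝ e x ^ 2 := by
    rw [he x, Fin.sum_univ_three]
    simp [real_inner_smul_left, mul_pow, div_eq_inv_mul]
  refine ⟨fun x ↦ √8 * inner ℝ e (x - a), fun x y ↦ ?_, by simp⟩
  have hxy : inner ℝ e (x - a) - inner ℝ e (y - a) = inner ℝ e (x - y) := by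
    rw [← inner_sub_right, sub_sub_sub_cancel_right]
  rw [norm_sq, ← mul_sub, hxy, mul_pow, Real.sq_sqrt (by norm_num),
    mul_div_cancel_left₀ _ (by norm_num)]

end IsUnitTetrahedron

namespace IsTetrahedronHeight

lemma eight_mul_norm_sub_sq (hw : IsTetrahedronHeight a b c d w) (x y : E) :
    8 * ‖x - y‖ ^ 2 =
      2 * ((‖x - a‖ ^ 2 - ‖y - a‖ ^ 2) - (‖x - b‖ ^ 2 - ‖y - b‖ ^ 2)) ^ 2 +
      2 * ((‖x - c‖ ^ 2 - ‖y - c‖ ^ 2) - (‖x - d‖ ^ 2 - ‖y - d‖ ^ 2)) ^ 2 +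
      ((‖x - a‖ ^ 2 - ‖y - a‖ ^ 2) + (‖x - b‖ ^ 2 - ‖y - b‖ ^ 2) -
        (‖x - c‖ ^ 2 - ‖y - c‖ ^ 2) - (‖x - d‖ ^ 2 - ‖y - d‖ ^ 2)) ^ 2 + (w x - w y) ^ 2 := by
  have axis : a + b - c - d = (a - c) + (b - d) := by abel
  rw [hw.norm_sub_sq x y, axis, inner_add_left]
  simp only [inner_sub_sub_eq_norm_sub_sq, norm_sub_rev x, norm_sub_rev y]
  ring

lemma swap (hw : IsTetrahedronHeight a b c d w) (h : IsUnitTetrahedron a b c d) :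
    IsTetrahedronHeight c d a b w where
  norm_sub_sq x y := by
    have axis : c + d - a - b = -(a + b - c - d) := by abel
    rw [hw.norm_sub_sq, axis, inner_neg_left, neg_sq, add_comm (inner ℝ (a - b) (x - y) ^ 2)]
  eq_zero_left := by
    have hca := hw.eight_mul_norm_sub_sq c a
    simp only [h.swap.norm_ac, h.swap.norm_ad, h.norm_ab, h.norm_ac, h.norm_ad, h.norm_cd,
      hw.eq_zero_left, sub_self, norm_zero] at hca
    have hc_sq : w c ^ 2 = 0 := by linear_combination -hca
    exact pow_eq_zero_iff two_ne_zero |>.1 hc_sq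

lemma sphere_eq (hw : IsTetrahedronHeight a b c d w) (h : IsUnitTetrahedron a b c d)
    (hxa : ‖x - a‖ = 1) (hxb : ‖x - b‖ = 1) :
    2 * (‖x - c‖ ^ 2 - ‖x - d‖ ^ 2) ^ 2 + (3 - ‖x - c‖ ^ 2 - ‖x - d‖ ^ 2) ^ 2 + w x ^ 2 = 6 := by
  have hx := hw.eight_mul_norm_sub_sq x a
  simp only [hxa, hxb, h.norm_ab, h.norm_ac, h.norm_ad, hw.eq_zero_left, sub_self, norm_zero] at hx
  linear_combination -hx

lemma lightCone_fst_mul_snd (hw : IsTetrahedronHeight a b c d w) (h : IsUnitTetrahedron a b c d)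
    (hxa : ‖x - a‖ = 1) (hxb : ‖x - b‖ = 1) :
    (lightCone c d w x).1 * (lightCone c d w x).2 =
      4 * (1 - (1 - ‖x - c‖ ^ 2) ^ 2 - (1 - ‖x - d‖ ^ 2) ^ 2) := by
  unfold lightCone
  linear_combination hw.sphere_eq h hxa hxb

lemma lightCone_spacelike (hw : IsTetrahedronHeight a b c d w) (h : IsUnitTetrahedron a b c d)
    (hxa : ‖x - a‖ = 1) (hxb : ‖x - b‖ = 1) (hxc : ‖x - c‖ ∈ Set.Ioc 0 1)
    (hxd : ‖x - d‖ ∈ Set.Ioc 0 1) (hx : 1 ≤ ‖x - c‖ ^ 2 + ‖x - d‖ ^ 2) :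
    0 < (lightCone c d w x).1 * (lightCone c d w x).2 := by
  have hc : 0 < ‖x - c‖ ^ 2 := pow_pos hxc.1 2
  have hd : 0 < ‖x - d‖ ^ 2 := pow_pos hxd.1 2
  have hc_le : ‖x - c‖ ^ 2 ≤ 1 := pow_le_one₀ hxc.1.le hxc.2
  have hd_le : ‖x - d‖ ^ 2 ≤ 1 := pow_le_one₀ hxd.1.le hxd.2
  have factor : 1 - (1 - ‖x - c‖ ^ 2) ^ 2 - (1 - ‖x - d‖ ^ 2) ^ 2 =
      ‖x - c‖ ^ 2 * (1 - ‖x - c‖ ^ 2 + ‖x - d‖ ^ 2) +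
        (1 - ‖x - d‖ ^ 2) * (‖x - c‖ ^ 2 + ‖x - d‖ ^ 2 - 1) := by ring
  have hpos : 0 < 1 - ‖x - c‖ ^ 2 + ‖x - d‖ ^ 2 := by linarith
  rw [hw.lightCone_fst_mul_snd h hxa hxb, factor]
  linarith [mul_pos hc hpos, mul_nonneg (sub_nonneg.2 hd_le) (sub_nonneg.2 hx)]

lemma lightCone_fst_neg_or_snd_pos (hw : IsTetrahedronHeight a b c d w)
    (h : IsUnitTetrahedron a b c d) (hxa : ‖x - a‖ = 1) (hxb : ‖x - b‖ = 1)
    (hxc : ‖x - c‖ ∈ Set.Ioc 0 1) (hxd : ‖x - d‖ ∈ Set.Ioc 0 1) :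
    (lightCone c d w x).1 < 0 ∨ 0 < (lightCone c d w x).2 := by
  by_contra! hpast
  have hx : 1 ≤ ‖x - c‖ ^ 2 + ‖x - d‖ ^ 2 := by
    unfold lightCone at hpast
    linarith
  exact (hw.lightCone_spacelike h hxa hxb hxc hxd hx).not_ge
    (mul_nonpos_of_nonneg_of_nonpos hpast.1 hpast.2)

lemma lorentzForm_lightCone_of_opposite_edges (hw : IsTetrahedronHeight a b c d w)
    (h : IsUnitTetrahedron a b c d) (hxa : ‖x - a‖ = 1) (hxb : ‖x - b‖ = 1)
    (hyc : ‖y - c‖ = 1) (hyd : ‖y - d‖ = 1) :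
    lorentzForm (lightCone c d w x) (lightCone a b w y) = 8 * (1 - ‖x - y‖ ^ 2) := by
  have hxy := hw.eight_mul_norm_sub_sq x y
  rw [hxa, hxb, hyc, hyd] at hxy
  unfold lorentzForm lightCone
  linear_combination hw.sphere_eq h hxa hxb + (hw.swap h).sphere_eq h.swap hyc hyd + hxy

lemma lorentzForm_lightCone_of_same_edge (hw : IsTetrahedronHeight a b c d w)
    (h : IsUnitTetrahedron a b c d) (hpq : IsUnitTetrahedron a b p q) :
    lorentzForm (lightCone c d w p) (lightCone c d w q) =
      -8 * ((1 - ‖p - c‖ ^ 2) * (1 - ‖q - c‖ ^ 2) + (1 - ‖p - d‖ ^ 2) * (1 - ‖q - d‖ ^ 2)) := by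
  have hxy := hw.eight_mul_norm_sub_sq p q
  rw [hpq.norm_cd, hpq.swap.norm_ac, hpq.swap.norm_ad, hpq.swap.norm_bc, hpq.swap.norm_bd] at hxy
  unfold lorentzForm lightCone
  linear_combination hw.sphere_eq h hpq.swap.norm_ac hpq.swap.norm_ad +
    hw.sphere_eq h hpq.swap.norm_bc hpq.swap.norm_bd + hxy

lemma two_le_sum_norm_sq (hw : IsTetrahedronHeight a b c d w)
    (h : IsUnitTetrahedron a b c d) (hpq : IsUnitTetrahedron a b p q) :
    2 ≤ ‖p - c‖ ^ 2 + ‖p - d‖ ^ 2 + ‖q - c‖ ^ 2 + ‖q - d‖ ^ 2 := by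
  have hxy := hw.eight_mul_norm_sub_sq p q
  rw [hpq.norm_cd, hpq.swap.norm_ac, hpq.swap.norm_ad, hpq.swap.norm_bc, hpq.swap.norm_bd] at hxy
  -- The midpoints of `pq` and of `cd` are equally far from that of `ab`, so the former cannot lie
  -- beyond the latter.
  have hmid : (6 - (‖p - c‖ ^ 2 + ‖p - d‖ ^ 2 + ‖q - c‖ ^ 2 + ‖q - d‖ ^ 2)) ^ 2 ≤ 4 ^ 2 := by
    linarith [hw.sphere_eq h hpq.swap.norm_ac hpq.swap.norm_ad,
      hw.sphere_eq h hpq.swap.norm_bc hpq.swap.norm_bd, sq_nonneg (w p + w q),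
      sq_nonneg (‖p - c‖ ^ 2 - ‖p - d‖ ^ 2 + (‖q - c‖ ^ 2 - ‖q - d‖ ^ 2))]
  linarith [le_of_sq_le_sq hmid (by norm_num)]

theorem exists_spacelike_lightCone_pair (hw : IsTetrahedronHeight a b c d w)
    (h : IsUnitTetrahedron a b c d) (hpq : IsUnitTetrahedron a b p q)
    (hdist : ∀ x ∈ ({p, q} : Set E), ∀ y ∈ ({c, d} : Set E), ‖x - y‖ ∈ Set.Ioc 0 1) :
    ∃ x ∈ ({p, q} : Set E), ∃ y ∈ ({p, q} : Set E),
      0 < (lightCone c d w x).1 * (lightCone c d w x).2 ∧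
      ((lightCone c d w y).1 < 0 ∨ 0 < (lightCone c d w y).2) ∧
      lorentzForm (lightCone c d w x) (lightCone c d w y) ≤ 0 := by
  obtain ⟨⟨hpc, hpd⟩, hqc, hqd⟩ :
      (‖p - c‖ ∈ Set.Ioc 0 1 ∧ ‖p - d‖ ∈ Set.Ioc 0 1) ∧
        ‖q - c‖ ∈ Set.Ioc 0 1 ∧ ‖q - d‖ ∈ Set.Ioc 0 1 := by
    simpa only [Set.mem_insert_iff, Set.mem_singleton_iff, forall_eq_or_imp, forall_eq] using hdist
  have form_nonpos : lorentzForm (lightCone c d w p) (lightCone c d w q) ≤ 0 := by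
    have defect_nonneg {t : ℝ} (ht : t ∈ Set.Ioc 0 1) : 0 ≤ 1 - t ^ 2 :=
      sub_nonneg.2 (pow_le_one₀ ht.1.le ht.2)
    rw [hw.lorentzForm_lightCone_of_same_edge h hpq]
    linarith [mul_nonneg (defect_nonneg hpc) (defect_nonneg hqc),
      mul_nonneg (defect_nonneg hpd) (defect_nonneg hqd)]
  obtain hp | hq : 1 ≤ ‖p - c‖ ^ 2 + ‖p - d‖ ^ 2 ∨ 1 ≤ ‖q - c‖ ^ 2 + ‖q - d‖ ^ 2 := by
    by_contra!
    linarith [hw.two_le_sum_norm_sq h hpq]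
  · exact ⟨p, by simp, q, by simp,
      hw.lightCone_spacelike h hpq.swap.norm_ac hpq.swap.norm_ad hpc hpd hp,
      hw.lightCone_fst_neg_or_snd_pos h hpq.swap.norm_bc hpq.swap.norm_bd hqc hqd, form_nonpos⟩
  · exact ⟨q, by simp, p, by simp,
      hw.lightCone_spacelike h hpq.swap.norm_bc hpq.swap.norm_bd hqc hqd hq,
      hw.lightCone_fst_neg_or_snd_pos h hpq.swap.norm_ac hpq.swap.norm_ad hpc hpd,
      lorentzForm_comm _ (lightCone c d w q) ▸ form_nonpos⟩

end IsTetrahedronHeight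

theorem IsUnitTetrahedron.false_of_adjacent [FiniteDimensional ℝ E] (hE : finrank ℝ E ≤ 4)
    (h : IsUnitTetrahedron a b c d) (hpq : IsUnitTetrahedron a b p q)
    (hrs : IsUnitTetrahedron c d r s)
    (hpq_cd : ∀ x ∈ ({p, q} : Set E), ∀ y ∈ ({c, d} : Set E), ‖x - y‖ ∈ Set.Ioc 0 1)
    (hrs_ab : ∀ x ∈ ({r, s} : Set E), ∀ y ∈ ({a, b} : Set E), ‖x - y‖ ∈ Set.Ioc 0 1)
    (hpq_rs : ∀ x ∈ ({p, q} : Set E), ∀ y ∈ ({r, s} : Set E), ‖x - y‖ ≤ 1) : False := by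
  obtain ⟨w, hw⟩ := h.exists_height hE
  have form_nonneg {x y : E} (hx : x ∈ ({p, q} : Set E)) (hy : y ∈ ({r, s} : Set E)) :
      0 ≤ lorentzForm (lightCone c d w x) (lightCone a b w y) := by
    obtain ⟨hxa, hxb⟩ : ‖x - a‖ = 1 ∧ ‖x - b‖ = 1 := by
      obtain rfl | rfl := hx
      exacts [⟨hpq.swap.norm_ac, hpq.swap.norm_ad⟩, ⟨hpq.swap.norm_bc, hpq.swap.norm_bd⟩]
    obtain ⟨hyc, hyd⟩ : ‖y - c‖ = 1 ∧ ‖y - d‖ = 1 := by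
      obtain rfl | rfl := hy
      exacts [⟨hrs.swap.norm_ac, hrs.swap.norm_ad⟩, ⟨hrs.swap.norm_bc, hrs.swap.norm_bd⟩]
    rw [hw.lorentzForm_lightCone_of_opposite_edges h hxa hxb hyc hyd]
    linarith [pow_le_one₀ (norm_nonneg _) (hpq_rs x hx y hy) (n := 2)]
  obtain ⟨x, hx, x', hx', x_space, x'_not_past, hxx'⟩ :=
    hw.exists_spacelike_lightCone_pair h hpq hpq_cd
  obtain ⟨y, hy, y', hy', y_space, y'_not_past, hyy'⟩ :=
    (hw.swap h).exists_spacelike_lightCone_pair h.swap hrs hrs_ab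
  exact false_of_lorentzForm x_space y_space x'_not_past y'_not_past hxx' hyy'
    (form_nonneg hx hy) (form_nonneg hx hy') (form_nonneg hx' hy) (form_nonneg hx' hy')

lemma exists_inter_eq_pair_and_sdiff_eq_pair {α : Type*} [DecidableEq α] {K L : Finset α}
    (hL : L.card = 4) (hKL : (K ∩ L).card = 2) :
    ∃ a b p q, a ≠ b ∧ p ≠ q ∧ (K ∩ L : Set α) = {a, b} ∧ (L \ K : Set α) = {p, q} := by
  have hLK : (L \ K).card = 2 := by
    rw [Finset.card_sdiff, hL, hKL]
  obtain ⟨a, b, hab, hKL_eq⟩ := Finset.card_eq_two.1 hKL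
  obtain ⟨p, q, hpq, hLK_eq⟩ := Finset.card_eq_two.1 hLK
  exact ⟨a, b, p, q, hab, hpq, by simp [← Finset.coe_inter, hKL_eq],
    by simp [← Finset.coe_sdiff, hLK_eq]⟩

theorem no_three_cliques_bad_intersection_pattern_general [FiniteDimensional ℝ E] [DecidableEq E]
    (hE : finrank ℝ E ≤ 4) {X : Set E} (hdiam : ∀ x ∈ X, ∀ y ∈ X, ‖x - y‖ ≤ 1)
    {K₁ K₂ K₃ : Finset E} (hX₁ : ↑K₁ ⊆ X) (hX₂ : ↑K₂ ⊆ X) (hX₃ : ↑K₃ ⊆ X)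
    (hcard₂ : K₂.card = 4) (hcard₃ : K₃.card = 4)
    (hK₁ : (K₁ : Set E).Pairwise fun x y ↦ ‖x - y‖ = 1)
    (hK₂ : (K₂ : Set E).Pairwise fun x y ↦ ‖x - y‖ = 1)
    (hK₃ : (K₃ : Set E).Pairwise fun x y ↦ ‖x - y‖ = 1)
    (h₁₂ : (K₁ ∩ K₂).card = 2) (h₁₃ : (K₁ ∩ K₃).card = 2) : ¬ Disjoint K₂ K₃ := by
  intro h₂₃
  obtain ⟨a, b, p, q, hab, hpq, ab_eq, pq_eq⟩ := exists_inter_eq_pair_and_sdiff_eq_pair hcard₂ h₁₂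
  obtain ⟨c, d, r, s, hcd, hrs, cd_eq, rs_eq⟩ := exists_inter_eq_pair_and_sdiff_eq_pair hcard₃ h₁₃
  obtain ⟨ab_sub₁, ab_sub₂⟩ := Set.subset_inter_iff.1 ab_eq.ge
  obtain ⟨cd_sub₁, cd_sub₃⟩ := Set.subset_inter_iff.1 cd_eq.ge
  obtain ⟨pq_sub₂, pq_disj₁⟩ := Set.subset_sdiff.1 pq_eq.ge
  obtain ⟨rs_sub₃, rs_disj₁⟩ := Set.subset_sdiff.1 rs_eq.ge
  have norm_mem_Ioc {A B : Set E} (hA : A ⊆ X) (hB : B ⊆ X) (hAB : Disjoint A B) :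
      ∀ x ∈ A, ∀ y ∈ B, ‖x - y‖ ∈ Set.Ioc 0 1 := fun x hx y hy ↦
    ⟨norm_sub_pos_iff.2 (hAB.ne_of_mem hx hy), hdiam x (hA hx) y (hB hy)⟩
  have habcd : IsUnitTetrahedron a b c d :=
    isUnitTetrahedron_of_pairwise hK₁ ab_sub₁ cd_sub₁ hab hcd
      ((Finset.disjoint_coe.2 h₂₃).mono ab_sub₂ cd_sub₃)
  have habpq : IsUnitTetrahedron a b p q :=
    isUnitTetrahedron_of_pairwise hK₂ ab_sub₂ pq_sub₂ hab hpq (pq_disj₁.symm.mono_left ab_sub₁)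
  have hcdrs : IsUnitTetrahedron c d r s :=
    isUnitTetrahedron_of_pairwise hK₃ cd_sub₃ rs_sub₃ hcd hrs (rs_disj₁.symm.mono_left cd_sub₁)
  exact habcd.false_of_adjacent hE habpq hcdrs
    (norm_mem_Ioc (pq_sub₂.trans hX₂) (cd_sub₁.trans hX₁) (pq_disj₁.mono_right cd_sub₁))
    (norm_mem_Ioc (rs_sub₃.trans hX₃) (ab_sub₁.trans hX₁) (rs_disj₁.mono_right ab_sub₁))
    fun x hx y hy ↦ hdiam x (hX₂ (pq_sub₂ hx)) y (hX₃ (rs_sub₃ hy))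

theorem no_three_cliques_bad_intersection_pattern
    (X : Finset (EuclideanSpace ℝ (Fin 4)))
    (hdiam : ∀ x ∈ X, ∀ y ∈ X, ‖x - y‖ ≤ 1) :
    ¬ ∃ K₁ K₂ K₃ : Finset (EuclideanSpace ℝ (Fin 4)),
      K₁ ⊆ X ∧ K₂ ⊆ X ∧ K₃ ⊆ X ∧
      K₁.card = 4 ∧ K₂.card = 4 ∧ K₃.card = 4 ∧
      (∀ x ∈ K₁, ∀ y ∈ K₁, x ≠ y → ‖x - y‖ = 1) ∧
      (∀ x ∈ K₂, ∀ y ∈ K₂, x ≠ y → ‖x - y‖ = 1) ∧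
      (∀ x ∈ K₃, ∀ y ∈ K₃, x ≠ y → ‖x - y‖ = 1) ∧
      (K₁ ∩ K₂).card = 2 ∧ (K₁ ∩ K₃).card = 2 ∧ K₂ ∩ K₃ = ∅ := by
  rintro ⟨K₁, K₂, K₃, hX₁, hX₂, hX₃, -, hcard₂, hcard₃, hK₁, hK₂, hK₃, h₁₂, h₁₃, h₂₃⟩
  exact no_three_cliques_bad_intersection_pattern_general finrank_euclideanSpace_fin.le hdiam
    hX₁ hX₂ hX₃ hcard₂ hcard₃ hK₁ hK₂ hK₃ h₁₂ h₁₃ (Finset.disjoint_iff_inter_eq_empty.2 h₂₃)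
end
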